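/- arXiv:0812.0997 — 8 statements merged into one kernel-verified Lean document; each statement's English description precedes it below -/
import Mathlib

section
/- Pointwise span inclusion (key step of the orbit computation): Assume Φ is three times continuously differentiable. Let x = (q,p) ∈ ℝ^{2n} be a point at which φ′(q₁−q₂)·φ″(qₙ−q₁) + φ′(qₙ−q₁)·φ″(q₁−q₂) ≠ 0. Then the linear span of the four vectors f(x), g(x), (ad²f g)(x), and [ad²f g, ad f g](x) contains the linear span of f(x), e_{p₁}, and e_{pₙ}; in particular it contains the coordinate vectors e_{p₁}, e_{p₂} and e_{pₙ}. -/
/-!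
The bracket `[f, g]` is the constant field `-e_{q₁}`, so the next two brackets are directional
derivatives along `e_{q₁}`: `ad² f g = Df · e_{q₁}` and `[ad² f g, ad f g] = D(Df · e_{q₁}) · e_{q₁}`.
Both have only momentum components, at `p₁`, `p₂` and `pₙ`. Modulo `e_{p₁}` they are
`a e_{p₂} + b e_{pₙ}` and `c e_{p₂} - d e_{pₙ}`, with `a = φ'(q₁ - q₂)`, `b = φ'(qₙ - q₁)`,
`c = φ''(q₁ - q₂)`, `d = φ''(qₙ - q₁)`. The hypothesis says `a d + b c ≠ 0`, so this `2 × 2`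
system can be solved for `e_{p₂}` and `e_{pₙ}`.
Particles `1`, `2`, `n` are the indices `0`, `1`, `-1` of `Fin n`.
-/

open scoped BigOperators
open MeasureTheory Filter Set

noncomputable section

/-- The state space ℝ^{2n}, with coordinates (q,p). -/
abbrev State (n : ℕ) := (Fin n → ℝ) × (Fin n → ℝ)

/-- The drift vector field of the periodic multiparticle system,
`f(q,p) = Σ p_k ∂/∂q_k + Σ (φ(q_{k-1}-q_k) - φ(q_k-q_{k+1})) ∂/∂p_k` with `φ = Φ'`,
with cyclic indexing in `Fin n`. -/
def drift (n : ℕ) [NeZero n] (Φ : ℝ → ℝ) (x : State n) : State n :=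
  (x.2, fun k => deriv Φ (x.1 (k - 1) - x.1 k) - deriv Φ (x.1 k - x.1 (k + 1)))

/-- The momentum coordinate vector `e_{p_j} = ∂/∂p_j`. -/
def ep (n : ℕ) [NeZero n] (j : Fin n) : State n := (0, Pi.single j 1)

/-- The position coordinate vector `e_{q_j} = ∂/∂q_j`. -/
def eq' (n : ℕ) [NeZero n] (j : Fin n) : State n := (Pi.single j 1, 0)

/-- `Φ` is admissible: real analytic, bounded below, and `Φ(y) → +∞` as `y → +∞`. -/
def Admissible (Φ : ℝ → ℝ) : Prop :=
  (∀ x, AnalyticAt ℝ Φ x) ∧ BddBelow (Set.range Φ) ∧ Tendsto Φ atTop atTop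

/-- `Φ` is generic: for no `b` is `Φ''` even or odd about `b`. -/
def Generic (Φ : ℝ → ℝ) : Prop :=
  ∀ b : ℝ,
    (¬ ∀ t : ℝ, deriv (deriv Φ) (b + t) = deriv (deriv Φ) (b - t)) ∧
    (¬ ∀ t : ℝ, deriv (deriv Φ) (b + t) = - deriv (deriv Φ) (b - t))

/-- Lie bracket of vector fields: `[X,Y](x) = DY(x)·X(x) − DX(x)·Y(x)`. -/
def lieBracket {n : ℕ} (X Y : State n → State n) : State n → State n :=
  fun x => fderiv ℝ Y x (X x) - fderiv ℝ X x (Y x)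

/-- Admissible trajectory of the single forced system `ẋ = f(x) + u(t) g`
(in absolutely-continuous/integral form). -/
def IsTrajectory (n : ℕ) [NeZero n] (Φ : ℝ → ℝ) (θ : ℝ) (u : ℝ → ℝ)
    (x : ℝ → State n) : Prop :=
  ContinuousOn x (Set.Icc 0 θ) ∧
  ∀ t ∈ Set.Icc 0 θ,
    x t = x 0 + ∫ s in (0:ℝ)..t, (drift n Φ (x s) + u s • ep n 0)

/-- A Fréchet derivative applied to a vector can be computed along a line. -/
lemma fderiv_apply_of_line {n : ℕ} {F : State n → State n} {x v L : State n}
    (hF : DifferentiableAt ℝ F x) (h : HasDerivAt (fun t : ℝ => F (x + t • v)) L 0) :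
    fderiv ℝ F x v = L := by
  rw [← hF.lineDeriv_eq_fderiv]
  exact h.deriv

/-- The momentum field with components
`ψ(q_{k-1} - q_k) α_k - ψ(q_k - q_{k+1}) β_k`. Up to the position part, the drift and its iterated
derivatives in fixed directions are all of this shape. -/
def forceField (n : ℕ) [NeZero n] (ψ : ℝ → ℝ) (α β : Fin n → ℝ) (x : State n) : Fin n → ℝ :=
  fun k => ψ (x.1 (k - 1) - x.1 k) * α k - ψ (x.1 k - x.1 (k + 1)) * β k

lemma differentiable_forceField {n : ℕ} [NeZero n] {ψ : ℝ → ℝ} (hψ : Differentiable ℝ ψ)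
    (α β : Fin n → ℝ) : Differentiable ℝ (forceField n ψ α β) := by
  unfold forceField
  fun_prop

lemma hasDerivAt_forceField {n : ℕ} [NeZero n] {ψ : ℝ → ℝ} (hψ : Differentiable ℝ ψ)
    (α β : Fin n → ℝ) (x v : State n) :
    HasDerivAt (fun t : ℝ => forceField n ψ α β (x + t • v))
      (forceField n (deriv ψ) (fun k => (v.1 (k - 1) - v.1 k) * α k)
        (fun k => (v.1 k - v.1 (k + 1)) * β k) x) 0 := by
  have key : ∀ i j : Fin n, HasDerivAt (fun t : ℝ => ψ ((x + t • v).1 i - (x + t • v).1 j))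
      (deriv ψ (x.1 i - x.1 j) * (v.1 i - v.1 j)) 0 := by
    intro i j
    have coord : ∀ i : Fin n, HasDerivAt (fun t : ℝ => (x + t • v).1 i) (v.1 i) 0 := by
      intro i
      simpa using ((hasDerivAt_id (0 : ℝ)).mul_const (v.1 i)).const_add (x.1 i)
    have h := (coord i).sub (coord j)
    have h2 : HasDerivAt ψ (deriv ψ (x.1 i - x.1 j))
        ((fun t : ℝ => (x + t • v).1 i - (x + t • v).1 j) 0) := by
      simpa using (hψ (x.1 i - x.1 j)).hasDerivAt
    exact h2.comp (0 : ℝ) h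
  rw [hasDerivAt_pi]
  intro k
  refine (((key (k - 1) k).mul_const (α k)).sub
    ((key k (k + 1)).mul_const (β k))).congr_deriv ?_
  simp only [forceField]
  ring

lemma drift_eq_forceField (n : ℕ) [NeZero n] (Φ : ℝ → ℝ) :
    drift n Φ = fun x => (x.2, forceField n (deriv Φ) 1 1 x) := by
  funext x
  refine Prod.ext rfl ?_
  funext k
  simp [drift, forceField]

lemma fderiv_drift {n : ℕ} [NeZero n] {Φ : ℝ → ℝ} (h : Differentiable ℝ (deriv Φ))
    (x v : State n) :
    fderiv ℝ (drift n Φ) x v = (v.2, forceField n (deriv (deriv Φ))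
      (fun k => v.1 (k - 1) - v.1 k) (fun k => v.1 k - v.1 (k + 1)) x) := by
  rw [drift_eq_forceField]
  apply fderiv_apply_of_line
  · exact (differentiable_snd.prodMk (differentiable_forceField h 1 1)) x
  · refine HasDerivAt.prodMk ?_ ?_
    · simpa using ((hasDerivAt_id (0 : ℝ)).smul_const v.2).const_add x.2
    · simpa using hasDerivAt_forceField h 1 1 x v

lemma fderiv_momentum {n : ℕ} [NeZero n] {ψ : ℝ → ℝ} (h : Differentiable ℝ ψ)
    (α β : Fin n → ℝ) (x v : State n) :
    fderiv ℝ (fun y : State n => ((0, forceField n ψ α β y) : State n)) x v =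
      (0, forceField n (deriv ψ) (fun k => (v.1 (k - 1) - v.1 k) * α k)
        (fun k => (v.1 k - v.1 (k + 1)) * β k) x) := by
  apply fderiv_apply_of_line
  · exact ((differentiable_const _).prodMk (differentiable_forceField h α β)) x
  · exact (hasDerivAt_const _ _).prodMk (hasDerivAt_forceField h α β x v)

lemma ad_drift {n : ℕ} [NeZero n] {Φ : ℝ → ℝ} (h : Differentiable ℝ (deriv Φ)) :
    lieBracket (drift n Φ) (fun _ => ep n 0) = fun _ => -eq' n 0 := by
  funext x
  simp only [lieBracket, fderiv_drift h]
  ext k <;> simp [ep, eq', forceField]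

/-- The momentum part of the `m`-fold derivative of the drift along `e_{q_0}`, when `ψ` is the
`m`-th derivative of `φ`: each differentiation multiplies a term by the difference of
the corresponding components of `e_{q_0}`. -/
def pushed (n : ℕ) [NeZero n] (ψ : ℝ → ℝ) (m : ℕ) (x : State n) : Fin n → ℝ :=
  forceField n ψ
    (fun k => ((eq' n 0).1 (k - 1) - (eq' n 0).1 k) ^ m)
    (fun k => ((eq' n 0).1 k - (eq' n 0).1 (k + 1)) ^ m) x

lemma ad_sq_drift {n : ℕ} [NeZero n] {Φ : ℝ → ℝ} (h : Differentiable ℝ (deriv Φ)) :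
    lieBracket (drift n Φ) (lieBracket (drift n Φ) (fun _ => ep n 0)) =
      fun x => (0, pushed n (deriv (deriv Φ)) 1 x) := by
  rw [ad_drift h]
  funext x
  simp only [lieBracket, fderiv_drift h]
  ext k
  · simp [eq']
  · simp [eq', pushed, forceField]
    ring

lemma bracket_ad_sq_ad {n : ℕ} [NeZero n] {Φ : ℝ → ℝ} (h : Differentiable ℝ (deriv Φ))
    (h' : Differentiable ℝ (deriv (deriv Φ))) (x : State n) :
    lieBracket (lieBracket (drift n Φ) (lieBracket (drift n Φ) (fun _ => ep n 0)))
      (lieBracket (drift n Φ) (fun _ => ep n 0)) x =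
      (0, pushed n (deriv (deriv (deriv Φ))) 2 x) := by
  rw [ad_sq_drift h, ad_drift h]
  simp only [lieBracket, pushed, pow_one, fderiv_momentum h']
  ext k
  · simp
  · simp [forceField]
    ring

/-- Expansion of a pushed field in momentum coordinate vectors. Particles `0`, `1`, `-1` are
pairwise distinct because `n ≥ 3`. -/
lemma pushed_eq {n : ℕ} [NeZero n] (hn : 3 ≤ n) (ψ : ℝ → ℝ) {m : ℕ} (hm : m ≠ 0) (x : State n) :
    ((0, pushed n ψ m x) : State n) =
      (ψ (x.1 (-1) - x.1 0) * (-1) ^ m - ψ (x.1 0 - x.1 1)) • ep n 0 +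
      ψ (x.1 0 - x.1 1) • ep n 1 - (ψ (x.1 (-1) - x.1 0) * (-1) ^ m) • ep n (-1) := by
  have h10 : (1 : Fin n) ≠ 0 := by
    intro h
    have := congrArg Fin.val h
    rw [Fin.val_one', Fin.val_zero, Nat.mod_eq_of_lt (by omega)] at this
    omega
  have h20 : (1 + 1 : Fin n) ≠ 0 := by
    intro h
    have := congrArg Fin.val h
    rw [Fin.val_add, Fin.val_one', Fin.val_zero, Nat.mod_eq_of_lt (a := 1) (by omega),
      Nat.mod_eq_of_lt (by omega)] at this
    omega
  have hm10 : (-1 : Fin n) ≠ 0 := neg_ne_zero.mpr h10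
  have h1m1 : (1 : Fin n) ≠ -1 := fun h => h20 (eq_neg_iff_add_eq_zero.mp h)
  have hm20 : (-1 - 1 : Fin n) ≠ 0 := by
    rw [sub_ne_zero]
    exact h1m1.symm
  ext k
  · simp [ep]
  · by_cases hk0 : k = 0
    · subst hk0
      simp [ep, eq', pushed, forceField, h10, hm10, h10.symm, hm10.symm]
    by_cases hk1 : k = 1
    · subst hk1
      simp [ep, eq', pushed, forceField, h10, h20, h1m1, hm]
    by_cases hk2 : k = -1
    · subst hk2
      simp [ep, eq', pushed, forceField, h1m1.symm, hm10, hm20, hm]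
    have e1 : k - 1 ≠ 0 := sub_ne_zero.mpr hk1
    have e2 : k + 1 ≠ 0 := fun h => hk2 (eq_neg_iff_add_eq_zero.mpr h)
    simp [ep, eq', pushed, forceField, hk0, hk1, hk2, e1, e2, hm]

/-- Pointwise span inclusion at points where the determinant
`φ'(q₁−q₂)·φ''(qₙ−q₁) + φ'(qₙ−q₁)·φ''(q₁−q₂)` does not vanish. -/
theorem span_inclusion (n : ℕ) [NeZero n] (hn : 3 ≤ n) (Φ : ℝ → ℝ)
    (hΦ : ContDiff ℝ 3 Φ) (x : State n)
    (hdet : deriv (deriv Φ) (x.1 0 - x.1 1) * deriv (deriv (deriv Φ)) (x.1 (-1) - x.1 0) +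
        deriv (deriv Φ) (x.1 (-1) - x.1 0) * deriv (deriv (deriv Φ)) (x.1 0 - x.1 1) ≠ 0) :
    Submodule.span ℝ ({drift n Φ x, ep n 0, ep n (-1)} : Set (State n)) ≤
      Submodule.span ℝ
        ({drift n Φ x, ep n 0,
          lieBracket (drift n Φ) (lieBracket (drift n Φ) (fun _ => ep n 0)) x,
          lieBracket (lieBracket (drift n Φ) (lieBracket (drift n Φ) (fun _ => ep n 0)))
            (lieBracket (drift n Φ) (fun _ => ep n 0)) x} : Set (State n)) ∧
    ep n 0 ∈ Submodule.span ℝ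
        ({drift n Φ x, ep n 0,
          lieBracket (drift n Φ) (lieBracket (drift n Φ) (fun _ => ep n 0)) x,
          lieBracket (lieBracket (drift n Φ) (lieBracket (drift n Φ) (fun _ => ep n 0)))
            (lieBracket (drift n Φ) (fun _ => ep n 0)) x} : Set (State n)) ∧
    ep n 1 ∈ Submodule.span ℝ
        ({drift n Φ x, ep n 0,
          lieBracket (drift n Φ) (lieBracket (drift n Φ) (fun _ => ep n 0)) x,
          lieBracket (lieBracket (drift n Φ) (lieBracket (drift n Φ) (fun _ => ep n 0)))
            (lieBracket (drift n Φ) (fun _ => ep n 0)) x} : Set (State n)) ∧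
    ep n (-1) ∈ Submodule.span ℝ
        ({drift n Φ x, ep n 0,
          lieBracket (drift n Φ) (lieBracket (drift n Φ) (fun _ => ep n 0)) x,
          lieBracket (lieBracket (drift n Φ) (lieBracket (drift n Φ) (fun _ => ep n 0)))
            (lieBracket (drift n Φ) (fun _ => ep n 0)) x} : Set (State n)) := by
  have h1 : ContDiff ℝ 2 (deriv Φ) := ContDiff.deriv' (by norm_num; exact hΦ)
  have h2 : ContDiff ℝ 1 (deriv (deriv Φ)) := ContDiff.deriv' (by norm_num; exact h1)
  have hd1 : Differentiable ℝ (deriv Φ) := h1.differentiable (by norm_num)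
  have hd2 : Differentiable ℝ (deriv (deriv Φ)) := h2.differentiable (by norm_num)
  rw [bracket_ad_sq_ad hd1 hd2, ad_sq_drift hd1]
  beta_reduce
  rw [pushed_eq hn _ one_ne_zero, pushed_eq hn _ two_ne_zero]
  generalize deriv (deriv Φ) (x.1 0 - x.1 1) = a at *
  generalize deriv (deriv Φ) (x.1 (-1) - x.1 0) = b at *
  generalize deriv (deriv (deriv Φ)) (x.1 0 - x.1 1) = c at *
  generalize deriv (deriv (deriv Φ)) (x.1 (-1) - x.1 0) = d at *
  set v : State n := (b * (-1) ^ 1 - a) • ep n 0 + a • ep n 1 - (b * (-1) ^ 1) • ep n (-1) with hv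
  set w : State n := (d * (-1) ^ 2 - c) • ep n 0 + c • ep n 1 - (d * (-1) ^ 2) • ep n (-1) with hw
  set S : Submodule ℝ (State n) := Submodule.span ℝ {drift n Φ x, ep n 0, v, w} with hS
  have mf : drift n Φ x ∈ S := Submodule.subset_span (by simp)
  have m0 : ep n 0 ∈ S := Submodule.subset_span (by simp)
  have mv : v ∈ S := Submodule.subset_span (by simp)
  have mw : w ∈ S := Submodule.subset_span (by simp)
  -- Cramer's rule, with the `e_{p_0}` components removed
  have m1 : ep n 1 ∈ S := by
    have e : (a * d + b * c) • ep n 1 =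
        d • v + b • w + (d * (b + a) - b * (d - c)) • ep n 0 := by
      rw [hv, hw]
      module
    rw [← S.smul_mem_iff hdet, e]
    exact S.add_mem (S.add_mem (S.smul_mem _ mv) (S.smul_mem _ mw)) (S.smul_mem _ m0)
  have mm1 : ep n (-1) ∈ S := by
    have e : (a * d + b * c) • ep n (-1) =
        c • v - a • w + (c * (b + a) + a * (d - c)) • ep n 0 := by
      rw [hv, hw]
      module
    rw [← S.smul_mem_iff hdet, e]
    exact S.add_mem (S.sub_mem (S.smul_mem _ mv) (S.smul_mem _ mw)) (S.smul_mem _ m0)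
  refine ⟨Submodule.span_le.mpr ?_, m0, m1, mm1⟩
  rintro y (rfl | rfl | rfl)
  exacts [mf, m0, mm1]
end
end

section
/- Bracket generating property for generic potentials (full orbits): Assume Φ is admissible and generic. Let L be the smallest set of smooth vector fields on ℝ^{2n} that contains f and g and is closed under Lie brackets. Then for every x ∈ ℝ^{2n}, the linear span of the set of evaluations {X(x) : X ∈ L} equals ℝ^{2n}; i.e. the pair {f, g} is bracket generating at every point of the state space. -/
/-!
Write `ψ = Φ''`. The evaluation at `x` of the Lie algebra generated by `f` and `g` does not change
when it is enlarged to the module `LocMod` it generates over germs at `x` of analytic functions, and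
this module is still closed under Lie brackets (`LocMod.lieBracket`, by the Leibniz rule). It
therefore suffices to show that all constant coordinate fields belong to it.

If `∂/∂p_k` belongs to the module, so does `∂/∂q_k = -[f, ∂/∂p_k]`, hence so do the iterated
brackets of `∂/∂q_k` with `f`. These have an explicit form (`kick`): they are combinations of
`∂/∂p_{k-1}`, `∂/∂p_k`, `∂/∂p_{k+1}` with coefficients the derivatives of `ψ` at
`q_{k-1} - q_k` and `q_k - q_{k+1}`.

* For `k = 1`, modulo `∂/∂p_1`, these fields are
  `ψ⁽ᵐ⁾(q_1 - q_2) ∂/∂p_2 + (-1)ᵐ ψ⁽ᵐ⁾(q_n - q_1) ∂/∂p_n`. If all the 2 × 2 determinants of their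
  coefficients vanished at `x`, then by analyticity `ψ(b - t) = c ψ(a + t)` for all `t`, where
  `a = q_1 - q_2` and `b = q_n - q_1`; applying this reflection twice gives `c = ±1`, so that `ψ` is
  even or odd about `(a + b) / 2`, contrary to genericity (`exists_det_ne_zero`). Dividing by a
  nonzero determinant puts `∂/∂p_2` in the module.
* If `∂/∂p_{k-1}` and `∂/∂p_k` are in the module, so is `ψ⁽ᵐ⁾(q_k - q_{k+1}) ∂/∂p_{k+1}` for all
  `m`. Since `ψ` is analytic and not identically zero, some coefficient is nonzero at `x`, and
  dividing by it puts `∂/∂p_{k+1}` in the module (`LocMod.ep_step`).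
-/

open scoped BigOperators
open MeasureTheory Filter Set

noncomputable section

/-- The smallest family of vector fields containing `F` and closed under Lie brackets. -/
inductive LieGen (n : ℕ) (F : Set (State n → State n)) : (State n → State n) → Prop
  | base (X : State n → State n) (hX : X ∈ F) : LieGen n F X
  | bracket (X Y : State n → State n) (hX : LieGen n F X) (hY : LieGen n F Y) :
      LieGen n F (lieBracket X Y)

open scoped Topology ContDiff

/-! ### One-variable facts about `ψ = Φ''` -/

/-- A real analytic function on the line all of whose derivatives vanish at one point is zero. -/
lemma eq_zero_of_iteratedDeriv_eq_zero {h : ℝ → ℝ} (hh : ∀ t, AnalyticAt ℝ h t) (a : ℝ)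
    (h0 : ∀ m, iteratedDeriv m h a = 0) : ∀ t, h t = 0 := by
  have htop : analyticOrderAt h a = ⊤ := by
    rw [ENat.eq_top_iff_forall_ge]
    intro m
    exact (natCast_le_analyticOrderAt_iff_iteratedDeriv_eq_zero (hh a)).2 fun i _ => h0 i
  have hev : h =ᶠ[𝓝 a] fun _ => (0 : ℝ) := analyticOrderAt_eq_top.1 htop
  have := AnalyticOnNhd.eq_of_eventuallyEq (𝕜 := ℝ) (f := h) (g := fun _ => (0 : ℝ))
    (fun t _ => hh t) (fun t _ => analyticAt_const) hev
  exact fun t => congrFun this t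

lemma exists_iteratedDeriv_ne_zero {ψ : ℝ → ℝ} (hψ : ∀ t, AnalyticAt ℝ ψ t)
    (hne : ∃ t, ψ t ≠ 0) (a : ℝ) : ∃ m, iteratedDeriv m ψ a ≠ 0 := by
  by_contra! hcon
  obtain ⟨t, ht⟩ := hne
  exact ht (eq_zero_of_iteratedDeriv_eq_zero hψ a hcon t)

/-- If `ψ` has no point of even or odd symmetry, then the jets of `t ↦ ψ (a + t)` and
`t ↦ ψ (b - t)` at `0` are linearly independent. -/
lemma exists_det_ne_zero {ψ : ℝ → ℝ} (hψ : ∀ t, AnalyticAt ℝ ψ t)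
    (hgen : ∀ b : ℝ, (¬ ∀ t, ψ (b + t) = ψ (b - t)) ∧ (¬ ∀ t, ψ (b + t) = - ψ (b - t)))
    (hne : ∃ t, ψ t ≠ 0) (a b : ℝ) :
    ∃ m l, iteratedDeriv m ψ a * ((-1) ^ l * iteratedDeriv l ψ b)
      - iteratedDeriv l ψ a * ((-1) ^ m * iteratedDeriv m ψ b) ≠ 0 := by
  by_contra! hcon
  obtain ⟨m₀, hm₀⟩ := exists_iteratedDeriv_ne_zero hψ hne a
  obtain ⟨c, hc⟩ : ∃ c, c = ((-1) ^ m₀ * iteratedDeriv m₀ ψ b) / iteratedDeriv m₀ ψ a := ⟨_, rfl⟩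
  have hBA : ∀ m, (-1) ^ m * iteratedDeriv m ψ b = c * iteratedDeriv m ψ a := by
    intro m
    rw [hc]
    field_simp
    linarith [hcon m₀ m]
  have ha1 : ∀ t, AnalyticAt ℝ (fun t => ψ (b - t)) t := fun t =>
    (hψ (b - t)).comp_of_eq (by fun_prop) rfl
  have ha2 : ∀ t, AnalyticAt ℝ (fun t => ψ (a + t)) t := fun t =>
    (hψ (a + t)).comp_of_eq (by fun_prop) rfl
  have hzero : ∀ t, ψ (b - t) - c * ψ (a + t) = 0 := by
    refine eq_zero_of_iteratedDeriv_eq_zero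
      (h := fun t => ψ (b - t) - c * ψ (a + t)) (fun t => ?_) 0 (fun m => ?_)
    · exact (ha1 t).sub (analyticAt_const.mul (ha2 t))
    · have e1 : ContDiffAt ℝ m (fun t => ψ (b - t)) 0 := (ha1 0).contDiffAt
      have e2 : ContDiffAt ℝ m (fun t => ψ (a + t)) 0 := (ha2 0).contDiffAt
      rw [iteratedDeriv_fun_sub e1 (contDiffAt_const.mul e2), iteratedDeriv_const_mul_field,
        iteratedDeriv_comp_const_sub, iteratedDeriv_comp_const_add]
      simpa [sub_eq_zero] using hBA m
  have hrefl : ∀ s, ψ ((a + b) / 2 - s) = c * ψ ((a + b) / 2 + s) := by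
    intro s
    have := hzero (s + (b - a) / 2)
    rw [show b - (s + (b - a) / 2) = (a + b) / 2 - s by ring,
      show a + (s + (b - a) / 2) = (a + b) / 2 + s by ring] at this
    linarith
  have hc2 : (c - 1) * (c + 1) = 0 := by
    obtain ⟨t, ht⟩ := hne
    have h1 := hrefl (t - (a + b) / 2)
    have h2 := hrefl (-(t - (a + b) / 2))
    rw [sub_neg_eq_add, ← sub_eq_add_neg, h1, add_sub_cancel] at h2
    have : ((c - 1) * (c + 1)) * ψ t = 0 := by linear_combination -h2
    exact (mul_eq_zero.1 this).resolve_right ht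
  rcases mul_eq_zero.1 hc2 with h | h
  · refine (hgen ((a + b) / 2)).1 fun t => ?_
    rw [hrefl t, show c = 1 by linarith, one_mul]
  · refine (hgen ((a + b) / 2)).2 fun t => ?_
    rw [hrefl t, show c = -1 by linarith]
    ring

/-! ### The local module generated by a Lie algebra of vector fields -/

/-- The module over germs at `x` of analytic functions generated by the vector fields in `LieGen`:
vector fields which near `x` are finite combinations of fields in `LieGen n F` with coefficients
analytic at `x` (real analyticity is expressed as `C^ω`). -/
inductive LocMod (n : ℕ) (F : Set (State n → State n)) (x : State n) :
    (State n → State n) → Prop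
  | base (X : State n → State n) (hX : LieGen n F X) : LocMod n F x X
  | add (X Y : State n → State n) (hX : LocMod n F x X) (hY : LocMod n F x Y) :
      LocMod n F x (X + Y)
  | smul (c : State n → ℝ) (X : State n → State n) (hc : ContDiffAt ℝ ω c x)
      (hX : LocMod n F x X) : LocMod n F x (fun y => c y • X y)
  | congr (X Y : State n → State n) (hXY : Y =ᶠ[𝓝 x] X) (hX : LocMod n F x X) : LocMod n F x Y

lemma lieBracket_eq_vectorField {n : ℕ} (X Y : State n → State n) :
    lieBracket X Y = VectorField.lieBracket ℝ X Y := rfl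

lemma eventually_differentiableAt {n : ℕ} {G : Type*} [NormedAddCommGroup G] [NormedSpace ℝ G]
    {X : State n → G} {x : State n} (h : ContDiffAt ℝ ω X x) :
    ∀ᶠ y in 𝓝 x, DifferentiableAt ℝ X y := by
  filter_upwards [h.eventually (by simp)] with y hy
  exact hy.differentiableAt (by simp)

lemma LieGen.contDiff {n : ℕ} {F : Set (State n → State n)} (hF : ∀ X ∈ F, ContDiff ℝ ω X)
    {X : State n → State n} (h : LieGen n F X) : ContDiff ℝ ω X := by
  induction h with
  | base X hX => exact hF X hX
  | bracket X Y _ _ hX hY =>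
    rw [lieBracket_eq_vectorField]
    exact hX.lieBracket_vectorField hY (by simp)

namespace LocMod

variable {n : ℕ} {F : Set (State n → State n)} {x : State n}

lemma contDiffAt (hF : ∀ X ∈ F, ContDiff ℝ ω X) {X : State n → State n}
    (h : LocMod n F x X) : ContDiffAt ℝ ω X x := by
  induction h with
  | base X hX => exact (hX.contDiff hF).contDiffAt
  | add X Y _ _ hX hY => exact hX.add hY
  | smul c X hc _ hX => exact hc.smul hX
  | congr X Y hXY _ hX => exact hX.congr_of_eventuallyEq hXY

lemma eval_mem {X : State n → State n} (h : LocMod n F x X) :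
    X x ∈ Submodule.span ℝ {v : State n | ∃ X, LieGen n F X ∧ X x = v} := by
  induction h with
  | base X hX => exact Submodule.subset_span ⟨X, hX, rfl⟩
  | add X Y _ _ hX hY => exact Submodule.add_mem _ hX hY
  | smul c X hc _ hX => exact Submodule.smul_mem _ _ hX
  | congr X Y hXY _ hX => rwa [hXY.eq_of_nhds]

lemma neg {X : State n → State n} (h : LocMod n F x X) : LocMod n F x (fun y => -X y) := by
  simpa using smul (fun _ => (-1 : ℝ)) X contDiffAt_const h

lemma sub {X Y : State n → State n} (hX : LocMod n F x X) (hY : LocMod n F x Y) :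
    LocMod n F x (fun y => X y - Y y) := by
  simpa [sub_eq_add_neg] using! add _ _ hX hY.neg

lemma swap {X Y : State n → State n} (h : LocMod n F x (lieBracket X Y)) :
    LocMod n F x (lieBracket Y X) := by
  convert h.neg using 1
  funext y
  simp [_root_.lieBracket]

/-- If bracketing with `Y` sends the generators into the module, it preserves the module. -/
lemma lieBracket_of_base (hF : ∀ X ∈ F, ContDiff ℝ ω X) {X Y : State n → State n}
    (hY : ContDiffAt ℝ ω Y x) (hbase : ∀ Z, LieGen n F Z → LocMod n F x (lieBracket Z Y))
    (hX : LocMod n F x X) : LocMod n F x (lieBracket X Y) := by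
  induction hX with
  | base X hX => exact hbase X hX
  | add X Z hX hZ ihX ihZ =>
    refine congr _ _ ?_ (add _ _ ihX ihZ)
    filter_upwards [eventually_differentiableAt (hX.contDiffAt hF),
      eventually_differentiableAt (hZ.contDiffAt hF)] with y h1 h2
    exact VectorField.lieBracket_add_left h1 h2
  | smul c X hc hX ih =>
    have hd : ContDiffAt ℝ ω (fun y => -(fderiv ℝ c y) (Y y)) x :=
      ((hc.fderiv_right (m := ω) (by simp)).clm_apply hY).neg
    refine congr _ _ ?_ (add _ _ (smul _ _ hd hX) (smul _ _ hc ih))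
    filter_upwards [eventually_differentiableAt (hX.contDiffAt hF),
      eventually_differentiableAt hc] with y h1 h2
    exact VectorField.lieBracket_smul_left h2 h1
  | congr X Z hXZ _ ih =>
    exact congr _ _ (Filter.EventuallyEq.lieBracket_vectorField hXZ (EventuallyEq.refl _ Y)) ih

lemma lieBracket (hF : ∀ X ∈ F, ContDiff ℝ ω X) {X Y : State n → State n}
    (hX : LocMod n F x X) (hY : LocMod n F x Y) : LocMod n F x (lieBracket X Y) := by
  refine lieBracket_of_base hF (hY.contDiffAt hF) (fun Z hZ => swap ?_) hX
  exact lieBracket_of_base hF (hZ.contDiff hF).contDiffAt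
    (fun W hW => base _ (LieGen.bracket _ _ hW hZ)) hY

/-- A coefficient nonzero at `x` can be divided out. -/
lemma of_smul {c : State n → ℝ} {X : State n → State n} (hc : ContDiffAt ℝ ω c x)
    (hcx : c x ≠ 0) (h : LocMod n F x (fun y => c y • X y)) : LocMod n F x X := by
  refine congr _ _ ?_ (smul (fun y => (c y)⁻¹) _ (hc.inv hcx) h)
  filter_upwards [hc.continuousAt.eventually_ne hcx] with y hy
  rw [smul_smul, inv_mul_cancel₀ hy, one_smul]

end LocMod

/-! ### Iterated brackets of `∂/∂q_k` with the drift -/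

/-- The `(m+1)`-st derivative of the drift in the direction `∂/∂q_k`, where `ψ = Φ''`. -/
def kick (n : ℕ) [NeZero n] (ψ : ℝ → ℝ) (k : Fin n) (m : ℕ) (y : State n) : State n :=
  iteratedDeriv m ψ (y.1 k - y.1 (k + 1)) • ep n (k + 1)
    + ((-1) ^ m * iteratedDeriv m ψ (y.1 (k - 1) - y.1 k)) • ep n (k - 1)
    - (iteratedDeriv m ψ (y.1 k - y.1 (k + 1))
        + (-1) ^ m * iteratedDeriv m ψ (y.1 (k - 1) - y.1 k)) • ep n k

section Computations

variable {n : ℕ}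

lemma fderiv_eq_of_hasDerivAt {X : State n → State n} {y v w : State n}
    (hX : DifferentiableAt ℝ X y) (h : HasDerivAt (fun t : ℝ => X (y + t • v)) w 0) :
    fderiv ℝ X y v = w := by
  rw [← hX.lineDeriv_eq_fderiv]
  exact h.deriv

lemma analyticAt_iteratedDeriv {ψ : ℝ → ℝ} (hψ : ∀ t, AnalyticAt ℝ ψ t) (m : ℕ) (t : ℝ) :
    AnalyticAt ℝ (iteratedDeriv m ψ) t := by
  rw [iteratedDeriv_eq_iterate]
  exact (hψ t).iterated_deriv m

lemma contDiff_of_analyticAt {ψ : ℝ → ℝ} (hψ : ∀ t, AnalyticAt ℝ ψ t) : ContDiff ℝ ω ψ :=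
  contDiff_iff_contDiffAt.2 fun t => (hψ t).contDiffAt

lemma contDiff_gap {ψ : ℝ → ℝ} (hψ : ∀ t, AnalyticAt ℝ ψ t) (i j : Fin n) :
    ContDiff ℝ ω (fun y : State n => ψ (y.1 i - y.1 j)) :=
  (contDiff_of_analyticAt hψ).comp (by fun_prop)

variable [NeZero n]

lemma contDiff_kick {ψ : ℝ → ℝ} (hψ : ∀ t, AnalyticAt ℝ ψ t) (k : Fin n) (m : ℕ) :
    ContDiff ℝ ω (kick n ψ k m) := by
  have h1 := contDiff_gap (analyticAt_iteratedDeriv hψ m) k (k + 1)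
  have h2 := contDiff_gap (analyticAt_iteratedDeriv hψ m) (k - 1) k
  unfold kick
  fun_prop

lemma contDiff_drift {Φ : ℝ → ℝ} (hΦ : ∀ t, AnalyticAt ℝ Φ t) : ContDiff ℝ ω (drift n Φ) := by
  have hφ : ∀ t, AnalyticAt ℝ (deriv Φ) t := fun t => (hΦ t).deriv
  refine contDiff_snd.prodMk (contDiff_pi.2 fun k => ?_)
  exact (contDiff_gap hφ _ _).sub (contDiff_gap hφ _ _)

/-- Derivative of a function of one gap `q_i - q_j` along `∂/∂q_k`. -/
lemma hasDerivAt_gap {ψ : ℝ → ℝ} (hψ : ∀ t, AnalyticAt ℝ ψ t) (y : State n) (i j k : Fin n) :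
    HasDerivAt (fun t : ℝ => ψ ((y + t • eq' n k).1 i - (y + t • eq' n k).1 j))
      (deriv ψ (y.1 i - y.1 j) *
        ((Pi.single k 1 : Fin n → ℝ) i - (Pi.single k 1 : Fin n → ℝ) j)) 0 := by
  have hin : HasDerivAt (fun t : ℝ => (y + t • eq' n k).1 i - (y + t • eq' n k).1 j)
      ((Pi.single k 1 : Fin n → ℝ) i - (Pi.single k 1 : Fin n → ℝ) j) 0 := by
    have h : ∀ l : Fin n, HasDerivAt (fun t : ℝ => (y + t • eq' n k).1 l)
        ((Pi.single k 1 : Fin n → ℝ) l) 0 := by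
      intro l
      simpa [eq'] using
        ((hasDerivAt_id (0 : ℝ)).mul_const ((Pi.single k 1 : Fin n → ℝ) l)).const_add (y.1 l)
    exact (h i).sub (h j)
  have hout : HasDerivAt ψ (deriv ψ (y.1 i - y.1 j))
      ((y + (0 : ℝ) • eq' n k).1 i - (y + (0 : ℝ) • eq' n k).1 j) := by
    simpa using (hψ (y.1 i - y.1 j)).differentiableAt.hasDerivAt
  exact hout.comp (0 : ℝ) hin

lemma fderiv_drift_ep {Φ : ℝ → ℝ} (hΦ : ∀ t, AnalyticAt ℝ Φ t) (k : Fin n) (y : State n) :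
    fderiv ℝ (drift n Φ) y (ep n k) = eq' n k := by
  refine fderiv_eq_of_hasDerivAt ((contDiff_drift hΦ).differentiable (by simp) y) ?_
  have : (fun t : ℝ => drift n Φ (y + t • ep n k)) = fun t => drift n Φ y + t • eq' n k := by
    funext t
    simp [drift, ep, eq']
  rw [this]
  simpa using ((hasDerivAt_id (0 : ℝ)).smul_const (eq' n k)).const_add (drift n Φ y)

lemma fderiv_drift_eq {Φ : ℝ → ℝ} (hΦ : ∀ t, AnalyticAt ℝ Φ t) (k : Fin n) (y : State n) :
    fderiv ℝ (drift n Φ) y (eq' n k) = kick n (deriv (deriv Φ)) k 0 y := by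
  have hφ : ∀ t, AnalyticAt ℝ (deriv Φ) t := fun t => (hΦ t).deriv
  refine fderiv_eq_of_hasDerivAt ((contDiff_drift hΦ).differentiable (by simp) y) ?_
  have h2 : HasDerivAt (fun t : ℝ => (drift n Φ (y + t • eq' n k)).2)
      (kick n (deriv (deriv Φ)) k 0 y).2 0 := by
    refine hasDerivAt_pi.2 fun i => ?_
    have h := (hasDerivAt_gap hφ y (i - 1) i k).sub (hasDerivAt_gap hφ y i (i + 1) k)
    refine h.congr_deriv ?_
    simp only [kick, ep, iteratedDeriv_zero, pow_zero, one_mul, Prod.snd_sub, Prod.snd_add,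
      Prod.smul_snd, Pi.sub_apply, Pi.add_apply, Pi.smul_apply, smul_eq_mul, Pi.single_apply,
      sub_eq_iff_eq_add, eq_sub_iff_add_eq]
    have e1 : (if i = k + 1 then deriv (deriv Φ) (y.1 (i - 1) - y.1 i) else 0)
        = if i = k + 1 then deriv (deriv Φ) (y.1 k - y.1 (k + 1)) else 0 := by
      split_ifs with hi
      · simp [hi]
      · rfl
    have e2 : (if i + 1 = k then deriv (deriv Φ) (y.1 i - y.1 (i + 1)) else 0)
        = if i + 1 = k then deriv (deriv Φ) (y.1 (k - 1) - y.1 k) else 0 := by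
      split_ifs with hi
      · simp [← hi]
      · rfl
    have e3 : (if i = k then
          deriv (deriv Φ) (y.1 (i - 1) - y.1 i) + deriv (deriv Φ) (y.1 i - y.1 (i + 1)) else 0)
        = if i = k then
          deriv (deriv Φ) (y.1 (k - 1) - y.1 k) + deriv (deriv Φ) (y.1 k - y.1 (k + 1)) else 0 := by
      split_ifs with hi
      · simp [hi]
      · rfl
    simp only [mul_sub, mul_ite, mul_one, mul_zero]
    rw [e1, e2]
    split_ifs at e3 ⊢ <;> linarith
  have h1 : HasDerivAt (fun t : ℝ => (drift n Φ (y + t • eq' n k)).1)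
      (kick n (deriv (deriv Φ)) k 0 y).1 0 := by
    have : (fun t : ℝ => (drift n Φ (y + t • eq' n k)).1) = fun _ => y.2 := by
      funext t
      simp [drift, eq']
    rw [this]
    simpa [kick, ep] using hasDerivAt_const (0 : ℝ) y.2
  exact h1.prodMk h2

lemma fderiv_kick_eq {ψ : ℝ → ℝ} (hψ : ∀ t, AnalyticAt ℝ ψ t) (k : Fin n) (hk1 : k + 1 ≠ k)
    (hk2 : k - 1 ≠ k) (m : ℕ) (y : State n) :
    fderiv ℝ (kick n ψ k m) y (eq' n k) = kick n ψ k (m + 1) y := by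
  refine fderiv_eq_of_hasDerivAt ((contDiff_kick hψ k m).differentiable (by simp) y) ?_
  have ha := hasDerivAt_gap (analyticAt_iteratedDeriv hψ m) y k (k + 1) k
  have hb := (hasDerivAt_gap (analyticAt_iteratedDeriv hψ m) y (k - 1) k k).const_mul
    ((-1 : ℝ) ^ m)
  refine (((ha.smul_const (ep n (k + 1))).add (hb.smul_const (ep n (k - 1)))).sub
    ((ha.add hb).smul_const (ep n k))).congr_deriv ?_
  simp [kick, hk1, hk2, iteratedDeriv_succ, pow_succ]

end Computations

/-! ### Propagation along the chain -/

section Propagation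

variable {n : ℕ} [NeZero n] {Φ : ℝ → ℝ} {x : State n}

lemma contDiff_generators (hΦ : ∀ t, AnalyticAt ℝ Φ t) :
    ∀ X ∈ ({drift n Φ, fun _ => ep n 0} : Set (State n → State n)), ContDiff ℝ ω X := by
  rintro X (rfl | rfl)
  · exact contDiff_drift hΦ
  · exact contDiff_const

lemma LocMod.drift_mem : LocMod n {drift n Φ, fun _ => ep n 0} x (drift n Φ) :=
  .base _ (.base _ (by simp))

lemma LocMod.eq_of_ep (hΦ : ∀ t, AnalyticAt ℝ Φ t) {k : Fin n}
    (h : LocMod n {drift n Φ, fun _ => ep n 0} x (fun _ => ep n k)) :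
    LocMod n {drift n Φ, fun _ => ep n 0} x (fun _ => eq' n k) := by
  have := LocMod.lieBracket (contDiff_generators hΦ) h LocMod.drift_mem
  convert this using 1
  funext y
  simp [_root_.lieBracket, fderiv_drift_ep hΦ]

lemma LocMod.kick_of_ep (hn : 3 ≤ n) (hΦ : ∀ t, AnalyticAt ℝ Φ t) {k : Fin n}
    (h : LocMod n {drift n Φ, fun _ => ep n 0} x (fun _ => ep n k)) (m : ℕ) :
    LocMod n {drift n Φ, fun _ => ep n 0} x (kick n (deriv (deriv Φ)) k m) := by
  have hψ : ∀ t, AnalyticAt ℝ (deriv (deriv Φ)) t := fun t => (hΦ t).deriv.deriv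
  have h10 : (1 : Fin n) ≠ 0 := by
    intro h
    have := congrArg Fin.val h
    rw [Fin.val_one', Nat.mod_eq_of_lt (by lia)] at this
    simp at this
  have hq := LocMod.eq_of_ep hΦ h
  induction m with
  | zero =>
    have := LocMod.lieBracket (contDiff_generators hΦ) hq LocMod.drift_mem
    convert this using 1
    funext y
    simp [_root_.lieBracket, fderiv_drift_eq hΦ]
  | succ m ih =>
    have := LocMod.lieBracket (contDiff_generators hΦ) hq ih
    convert this using 1
    funext y
    simp [_root_.lieBracket, fderiv_kick_eq hψ k (by simpa using h10) (by simpa using h10)]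

/-- The field `kick` modulo `∂/∂p_k`. -/
lemma LocMod.pair_of_ep (hn : 3 ≤ n) (hΦ : ∀ t, AnalyticAt ℝ Φ t) {k : Fin n}
    (h : LocMod n {drift n Φ, fun _ => ep n 0} x (fun _ => ep n k)) (m : ℕ) :
    LocMod n {drift n Φ, fun _ => ep n 0} x (fun y =>
      iteratedDeriv m (deriv (deriv Φ)) (y.1 k - y.1 (k + 1)) • ep n (k + 1)
      + ((-1) ^ m * iteratedDeriv m (deriv (deriv Φ)) (y.1 (k - 1) - y.1 k)) • ep n (k - 1)) := by
  have hψ : ∀ t, AnalyticAt ℝ (deriv (deriv Φ)) t := fun t => (hΦ t).deriv.deriv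
  have h1 := contDiff_gap (analyticAt_iteratedDeriv hψ m) k (k + 1)
  have h2 := contDiff_gap (analyticAt_iteratedDeriv hψ m) (k - 1) k
  have hc : ContDiffAt ℝ ω (fun y : State n =>
      iteratedDeriv m (deriv (deriv Φ)) (y.1 k - y.1 (k + 1))
        + (-1) ^ m * iteratedDeriv m (deriv (deriv Φ)) (y.1 (k - 1) - y.1 k)) x := by
    fun_prop
  convert LocMod.add _ _ (LocMod.kick_of_ep hn hΦ h m) (LocMod.smul _ _ hc h) using 1
  funext y
  simp [kick]

/-- Two consecutive momentum fields `∂/∂p_{k-1}`, `∂/∂p_k` yield the next one. -/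
lemma LocMod.ep_step (hn : 3 ≤ n) (hΦ : ∀ t, AnalyticAt ℝ Φ t)
    (hne : ∃ t, deriv (deriv Φ) t ≠ 0) {k : Fin n}
    (h0 : LocMod n {drift n Φ, fun _ => ep n 0} x (fun _ => ep n (k - 1)))
    (h : LocMod n {drift n Φ, fun _ => ep n 0} x (fun _ => ep n k)) :
    LocMod n {drift n Φ, fun _ => ep n 0} x (fun _ => ep n (k + 1)) := by
  have hψ : ∀ t, AnalyticAt ℝ (deriv (deriv Φ)) t := fun t => (hΦ t).deriv.deriv
  obtain ⟨m, hm⟩ := exists_iteratedDeriv_ne_zero hψ hne (x.1 k - x.1 (k + 1))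
  have h1 := contDiff_gap (analyticAt_iteratedDeriv hψ m) k (k + 1)
  have h2 := contDiff_gap (analyticAt_iteratedDeriv hψ m) (k - 1) k
  have hc : ContDiffAt ℝ ω (fun y : State n =>
      (-1) ^ m * iteratedDeriv m (deriv (deriv Φ)) (y.1 (k - 1) - y.1 k)) x :=
    (contDiff_const.mul h2).contDiffAt
  refine LocMod.of_smul h1.contDiffAt hm ?_
  simpa using LocMod.sub (LocMod.pair_of_ep hn hΦ h m) (LocMod.smul _ _ hc h0)

/-- The first neighbour of the forced particle, where genericity enters. -/
lemma LocMod.ep_one (hn : 3 ≤ n) (hΦ : ∀ t, AnalyticAt ℝ Φ t) (hgen : Generic Φ)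
    (hne : ∃ t, deriv (deriv Φ) t ≠ 0) :
    LocMod n {drift n Φ, fun _ => ep n 0} x (fun _ => ep n (0 + 1)) := by
  have hψ : ∀ t, AnalyticAt ℝ (deriv (deriv Φ)) t := fun t => (hΦ t).deriv.deriv
  have h0 : LocMod n {drift n Φ, fun _ => ep n 0} x (fun _ => ep n 0) :=
    .base _ (.base _ (by simp))
  obtain ⟨m, l, hml⟩ :=
    exists_det_ne_zero hψ hgen hne (x.1 0 - x.1 (0 + 1)) (x.1 (0 - 1) - x.1 0)
  have h1 := fun m => contDiff_gap (analyticAt_iteratedDeriv hψ m) (0 : Fin n) (0 + 1)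
  have h2 := fun m => contDiff_gap (analyticAt_iteratedDeriv hψ m) (0 - 1 : Fin n) 0
  have hB : ∀ m : ℕ, ContDiff ℝ ω (fun y : State n =>
      (-1) ^ m * iteratedDeriv m (deriv (deriv Φ)) (y.1 (0 - 1) - y.1 0)) := fun m =>
    contDiff_const.mul (h2 m)
  refine LocMod.of_smul (((h1 m).mul (hB l)).sub ((h1 l).mul (hB m))).contDiffAt hml ?_
  -- Cramer's rule: eliminate `∂/∂p_n` between the fields of orders `m` and `l`.
  convert LocMod.sub
    (LocMod.smul _ _ (hB l).contDiffAt (LocMod.pair_of_ep hn hΦ h0 m))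
    (LocMod.smul _ _ (hB m).contDiffAt (LocMod.pair_of_ep hn hΦ h0 l)) using 1
  funext y
  module

lemma LocMod.ep_all (hn : 3 ≤ n) (hΦ : ∀ t, AnalyticAt ℝ Φ t) (hgen : Generic Φ) (k : Fin n) :
    LocMod n {drift n Φ, fun _ => ep n 0} x (fun _ => ep n k) := by
  have hne : ∃ t, deriv (deriv Φ) t ≠ 0 := by
    by_contra! hcon
    exact (hgen 0).1 fun t => by simp [hcon]
  have key : ∀ m : ℕ, LocMod n {drift n Φ, fun _ => ep n 0} x (fun _ => ep n (Fin.ofNat n m)) ∧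
      LocMod n {drift n Φ, fun _ => ep n 0} x (fun _ => ep n (Fin.ofNat n m + 1)) := by
    intro m
    induction m with
    | zero => exact ⟨.base _ (.base _ (by simp)), LocMod.ep_one hn hΦ hgen hne⟩
    | succ m ih =>
      have hs : Fin.ofNat n (m + 1) = Fin.ofNat n m + 1 := by
        ext
        simp [Fin.val_add]
      rw [hs]
      exact ⟨ih.2, LocMod.ep_step hn hΦ hne (by simpa using ih.1) ih.2⟩
  simpa using (key k).1

end Propagation

/-- For admissible generic `Φ`, the pair `{f, g}` is bracket generating at
every point of the state space: evaluations of the bracket-closure of `{f,g}` span ℝ^{2n}. -/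
theorem bracket_generating_generic (n : ℕ) [NeZero n] (hn : 3 ≤ n) (Φ : ℝ → ℝ)
    (hadm : Admissible Φ) (hgen : Generic Φ) :
    ∀ x : State n,
      Submodule.span ℝ
        {v : State n | ∃ X : State n → State n,
          LieGen n {drift n Φ, fun _ => ep n 0} X ∧ X x = v} = ⊤ := by
  intro x
  have hp := fun k => (LocMod.ep_all (x := x) hn hadm.1 hgen k).eval_mem
  have hq := fun k => (LocMod.eq_of_ep hadm.1 (LocMod.ep_all (x := x) hn hadm.1 hgen k)).eval_mem
  refine eq_top_iff.2 fun v _ => ?_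
  have hv : v = ∑ k, v.1 k • eq' n k + ∑ k, v.2 k • ep n k := by
    ext i <;> simp [eq', ep, Prod.fst_sum, Prod.snd_sum, Finset.sum_apply, Pi.single_apply]
  rw [hv]
  exact Submodule.add_mem _
    (Submodule.sum_mem _ fun k _ => Submodule.smul_mem _ _ (hq k))
    (Submodule.sum_mem _ fun k _ => Submodule.smul_mem _ _ (hp k))
end
end

section
/- Invariance and bracket generation of the 2-distribution on the zero-momentum hyperplane: Assume Φ is admissible and generic. Then: (a) at every point x ∈ ℝ^{2n} the vectors f(x) and [g,f](x) = e_{q₁} lie in the hyperplane direction space T = {(v,w) ∈ ℝⁿ × ℝⁿ : w₁ + ⋯ + wₙ = 0}, so the distribution D spanned by f and [g,f] is tangent to Π; (b) letting L be the smallest set of smooth vector fields containing f and [g,f] and closed under Lie brackets, for every x ∈ Π the linear span of {X(x) : X ∈ L} equals T, i.e. D is bracket generating on Π. -/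
/-!
Write `ψ = Φ''`. The `(m+1)`-fold bracket of `∂/∂q_k` with the drift `f` is
`ψ⁽ᵐ⁾(q_k - q_{k+1}) (∂/∂p_{k+1} - ∂/∂p_k) + (-1)ᵐ ψ⁽ᵐ⁾(q_{k-1} - q_k) (∂/∂p_{k-1} - ∂/∂p_k)`.
If at some point the coefficient vectors of these fields failed to span the plane, Taylor expansion
would give `ψ(b - t) = c ψ(a + t)` for all `t`, with `a = q_k - q_{k+1}` and `b = q_{k-1} - q_k`;
iterating the reflection gives `c = ±1`, so `ψ` would be even or odd about `(a + b) / 2`, contrary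
to genericity (`exists_wronskian_ne_zero`).

Hence near any point `∂/∂p_{k+1} - ∂/∂p_k` is a combination, with analytic coefficients, of two of
these brackets (`localGen_momentum_diff`). Such local combinations of iterated brackets,
`LocalGen`, are again closed under brackets by the Leibniz rule (`LocalGen.bracket`), and their
values at the point lie in the span of the values of the iterated brackets (`LocalGen.mem_span`).
Since `[∂/∂p_{k+1} - ∂/∂p_k, f] = ∂/∂q_{k+1} - ∂/∂q_k`, one passes from `∂/∂q_k` to `∂/∂q_{k+1}`,
and starting from `[g, f] = ∂/∂q_1` one obtains every `∂/∂q_k` and every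
`∂/∂p_{k+1} - ∂/∂p_k` (`localGen_position`). These span the direction space `T`
(`Tset_subset_of_mem`). Conversely all brackets take values in `T`, because the derivative of a
`T`-valued field is `T`-valued (`LieGen.sum_snd_eq_zero`).
-/

open scoped BigOperators
open MeasureTheory Filter Set

noncomputable section

/-- The direction space `T = {(v,w) : w₁ + ⋯ + wₙ = 0}` of the zero-momentum hyperplane. -/
def Tset (n : ℕ) : Set (State n) := {y : State n | ∑ i, y.2 i = 0}

open scoped Topology

/-! ### Taylor coefficients of a generic analytic function -/

theorem eq_zero_of_iteratedDeriv_eq_zero_s7 {F : ℝ → ℝ} (hF : ∀ x, AnalyticAt ℝ F x) (a : ℝ)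
    (h : ∀ m, iteratedDeriv m F a = 0) (x : ℝ) : F x = 0 := by
  have htop : analyticOrderAt F a = ⊤ := by
    rw [ENat.eq_top_iff_forall_ge]
    intro m
    exact (natCast_le_analyticOrderAt_iff_iteratedDeriv_eq_zero (hF a)).2 fun i _ => h i
  have hev : F =ᶠ[𝓝 a] (fun _ => (0 : ℝ)) := analyticOrderAt_eq_top.1 htop
  exact congrFun (AnalyticOnNhd.eq_of_eventuallyEq (f := F) (g := fun _ => (0 : ℝ))
    (fun x _ => hF x) (fun x _ => analyticAt_const) hev) x

/-- The vectors `(ψ⁽ᵐ⁾(a), (-1)ᵐ ψ⁽ᵐ⁾(b))`, `m ∈ ℕ`, span the plane. Otherwise they are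
proportional to a fixed vector, Taylor expansion gives `ψ(b - t) = c ψ(a + t)` for all `t`, and
applying this reflection twice forces `c = ±1`, so `ψ` is even or odd about `(a + b) / 2`. -/
theorem exists_wronskian_ne_zero {ψ : ℝ → ℝ} (hψ : ∀ x, AnalyticAt ℝ ψ x)
    (hgen : ∀ b : ℝ, (¬ ∀ t : ℝ, ψ (b + t) = ψ (b - t)) ∧ (¬ ∀ t : ℝ, ψ (b + t) = - ψ (b - t)))
    (a b : ℝ) : ∃ m l : ℕ,
      iteratedDeriv m ψ a * ((-1) ^ l * iteratedDeriv l ψ b)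
        - iteratedDeriv l ψ a * ((-1) ^ m * iteratedDeriv m ψ b) ≠ 0 := by
  by_contra! hW
  have hne : ∃ s, ψ s ≠ 0 := by
    by_contra! h0
    exact (hgen 0).1 fun t => by rw [h0, h0]
  obtain ⟨m₀, hm₀⟩ : ∃ m, iteratedDeriv m ψ a ≠ 0 := by
    by_contra! h0
    obtain ⟨s, hs⟩ := hne
    exact hs (eq_zero_of_iteratedDeriv_eq_zero_s7 hψ a h0 s)
  set c : ℝ := (-1) ^ m₀ * iteratedDeriv m₀ ψ b / iteratedDeriv m₀ ψ a with hc
  have hprop : ∀ l, (-1) ^ l * iteratedDeriv l ψ b = c * iteratedDeriv l ψ a := by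
    intro l
    rw [hc]
    field_simp
    linarith [hW m₀ l]
  have hb : ∀ t, AnalyticAt ℝ (fun t => ψ (b - t)) t := fun t =>
    (hψ (b - t)).comp_of_eq (by fun_prop) rfl
  have ha : ∀ t, AnalyticAt ℝ (fun t => c * ψ (a + t)) t := fun t =>
    analyticAt_const.mul ((hψ (a + t)).comp_of_eq (by fun_prop) rfl)
  have hrefl : ∀ t, ψ (b - t) = c * ψ (a + t) := by
    intro t
    have := eq_zero_of_iteratedDeriv_eq_zero_s7
      (F := (fun t => ψ (b - t)) - (fun t => c * ψ (a + t)))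
      (fun t => (hb t).sub (ha t)) 0 (fun m => by
        rw [iteratedDeriv_sub (hb 0).contDiffAt (ha 0).contDiffAt, iteratedDeriv_comp_const_sub,
          iteratedDeriv_const_mul_field, iteratedDeriv_comp_const_add]
        simp [hprop m]) t
    simpa [sub_eq_zero] using this
  have hmid : ∀ s, ψ ((a + b) / 2 - s) = c * ψ ((a + b) / 2 + s) := by
    intro s
    rw [show (a + b) / 2 - s = b - ((b - a) / 2 + s) by ring, hrefl,
      show a + ((b - a) / 2 + s) = (a + b) / 2 + s by ring]
  obtain ⟨s, hs⟩ := hne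
  have hcc : c * c = 1 := by
    have h1 := hmid (s - (a + b) / 2)
    have h2 := hmid (-(s - (a + b) / 2))
    rw [show (a + b) / 2 + (s - (a + b) / 2) = s by ring] at h1
    rw [show (a + b) / 2 - -(s - (a + b) / 2) = s by ring,
      show (a + b) / 2 + -(s - (a + b) / 2) = (a + b) / 2 - (s - (a + b) / 2) by ring, h1] at h2
    have h3 : (c * c - 1) * ψ s = 0 := by linarith
    rcases mul_eq_zero.1 h3 with h | h
    · linarith
    · exact absurd h hs
  rcases mul_self_eq_one_iff.1 hcc with h | h
  · exact (hgen ((a + b) / 2)).1 fun t => by rw [hmid t, h, one_mul]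
  · exact (hgen ((a + b) / 2)).2 fun t => by rw [hmid t, h]; ring

/-! ### Local analytic combinations of iterated brackets -/

/-- The fields that are, near `x`, combinations of iterated brackets of fields in `F` with
coefficients that are functions analytic at `x`. -/
inductive LocalGen (n : ℕ) (F : Set (State n → State n)) (x : State n) :
    (State n → State n) → Prop
  | gen (X : State n → State n) (hX : LieGen n F X) : LocalGen n F x X
  | add (Y Z : State n → State n) (hY : LocalGen n F x Y) (hZ : LocalGen n F x Z) :
      LocalGen n F x (Y + Z)
  | smul (h : State n → ℝ) (Y : State n → State n) (hh : AnalyticAt ℝ h x)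
      (hY : LocalGen n F x Y) : LocalGen n F x (fun y => h y • Y y)
  | congr (Y Z : State n → State n) (hYZ : Y =ᶠ[𝓝 x] Z) (hY : LocalGen n F x Y) :
      LocalGen n F x Z

section LocalGen

variable {n : ℕ} {F : Set (State n → State n)}

theorem AnalyticAt.apply_state {G : Type*} [NormedAddCommGroup G] [NormedSpace ℝ G]
    {A : State n → State n →L[ℝ] G} {X : State n → State n} {x : State n}
    (hA : AnalyticAt ℝ A x) (hX : AnalyticAt ℝ X x) : AnalyticAt ℝ (fun y => A y (X y)) x :=
  ((ContinuousLinearMap.id ℝ (State n →L[ℝ] G)).analyticAt_bilinear (A x, X x)).comp_of_eq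
    (hA.prod hX) rfl

theorem AnalyticAt.lieBracket_state {X Y : State n → State n} {x : State n}
    (hX : AnalyticAt ℝ X x) (hY : AnalyticAt ℝ Y x) : AnalyticAt ℝ (lieBracket X Y) x :=
  (hY.fderiv.apply_state hX).sub (hX.fderiv.apply_state hY)

theorem LieGen.analyticAt (hF : ∀ X ∈ F, ∀ x, AnalyticAt ℝ X x) {X : State n → State n}
    (hX : LieGen n F X) (x : State n) : AnalyticAt ℝ X x := by
  induction hX with
  | base X h => exact hF X h x
  | bracket X Y _ _ ihX ihY => exact ihX.lieBracket_state ihY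

theorem LocalGen.analyticAt (hF : ∀ X ∈ F, ∀ x, AnalyticAt ℝ X x) {x : State n}
    {Y : State n → State n} (hY : LocalGen n F x Y) : AnalyticAt ℝ Y x := by
  induction hY with
  | gen X h => exact h.analyticAt hF x
  | add Y Z _ _ ihY ihZ => exact ihY.add ihZ
  | smul h Y hh _ ih => exact hh.smul ih
  | congr Y Z hYZ _ ih => exact ih.congr hYZ

theorem LocalGen.mem_span {x : State n} {Y : State n → State n} (hY : LocalGen n F x Y) :
    Y x ∈ Submodule.span ℝ {v : State n | ∃ X, LieGen n F X ∧ X x = v} := by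
  induction hY with
  | gen X h => exact Submodule.subset_span ⟨X, h, rfl⟩
  | add Y Z _ _ ihY ihZ => exact Submodule.add_mem _ ihY ihZ
  | smul h Y _ _ ih => exact Submodule.smul_mem _ _ ih
  | congr Y Z hYZ _ ih => exact hYZ.eq_of_nhds ▸ ih

theorem LocalGen.const_smul {x : State n} {Y : State n → State n} (hY : LocalGen n F x Y)
    (c : ℝ) : LocalGen n F x (fun y => c • Y y) :=
  LocalGen.smul (fun _ => c) Y analyticAt_const hY

/-- Bracketing with `X` on the left preserves `LocalGen` as soon as it sends the iterated brackets
themselves into `LocalGen`, by the Leibniz rule `[X, hY] = X(h) Y + h [X, Y]`. -/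
theorem LocalGen.bracket_of_gen (hF : ∀ X ∈ F, ∀ x, AnalyticAt ℝ X x) {x : State n}
    {X : State n → State n} (hX : AnalyticAt ℝ X x)
    (hgen : ∀ Z, LieGen n F Z → LocalGen n F x (lieBracket X Z))
    {Z : State n → State n} (hZ : LocalGen n F x Z) : LocalGen n F x (lieBracket X Z) := by
  induction hZ with
  | gen Z h => exact hgen Z h
  | add Y Z hY hZ ihY ihZ =>
    refine LocalGen.congr _ _ ?_ (LocalGen.add _ _ ihY ihZ)
    filter_upwards [(hY.analyticAt hF).eventually_analyticAt,
      (hZ.analyticAt hF).eventually_analyticAt] with y h1 h2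
    exact (VectorField.lieBracket_add_right h1.differentiableAt h2.differentiableAt).symm
  | smul h Y hh hY ih =>
    refine LocalGen.congr _ _ ?_ (LocalGen.add _ _
      (LocalGen.smul (fun y => fderiv ℝ h y (X y)) Y (hh.fderiv.apply_state hX) hY)
      (LocalGen.smul h _ hh ih))
    filter_upwards [hh.eventually_analyticAt,
      (hY.analyticAt hF).eventually_analyticAt] with y h1 h2
    exact (VectorField.lieBracket_smul_right h1.differentiableAt h2.differentiableAt).symm
  | congr Y Z hYZ _ ih =>
    refine LocalGen.congr _ _ ?_ ih
    exact (EventuallyEq.refl _ X).lieBracket_vectorField (𝕜 := ℝ) hYZ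

theorem LocalGen.swap {x : State n} {X Y : State n → State n}
    (h : LocalGen n F x (lieBracket X Y)) : LocalGen n F x (lieBracket Y X) := by
  refine LocalGen.congr _ _ (Eventually.of_forall fun y => ?_) (h.const_smul (-1))
  simp [lieBracket]

theorem LocalGen.bracket (hF : ∀ X ∈ F, ∀ x, AnalyticAt ℝ X x) {x : State n}
    {Y Z : State n → State n} (hY : LocalGen n F x Y) (hZ : LocalGen n F x Z) :
    LocalGen n F x (lieBracket Y Z) :=
  LocalGen.bracket_of_gen hF (hY.analyticAt hF)
    (fun X hX => (LocalGen.bracket_of_gen hF (hX.analyticAt hF x)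
      (fun X' hX' => .gen _ (.bracket X X' hX hX')) hY).swap) hZ

/-- Iterated brackets of analytic fields with values in `T` have values in `T`: the linear form
defining `T` annihilates such fields, hence also their derivatives. -/
theorem LieGen.sum_snd_eq_zero {F : Set (State n → State n)}
    (hF : ∀ X ∈ F, ∀ x, AnalyticAt ℝ X x) (hT : ∀ X ∈ F, ∀ x, X x ∈ Tset n)
    {X : State n → State n} (hX : LieGen n F X) (x : State n) : X x ∈ Tset n := by
  induction hX generalizing x with
  | base X h => exact hT X h x
  | bracket X Y hX hY ihX ihY =>
    let ℓ : State n →L[ℝ] ℝ :=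
      (∑ i, ContinuousLinearMap.proj i).comp (ContinuousLinearMap.snd ℝ (Fin n → ℝ) (Fin n → ℝ))
    have hℓ : ∀ v : State n, ℓ v = ∑ i, v.2 i := fun v => by simp [ℓ]
    have key : ∀ Z : State n → State n, LieGen n F Z → (∀ x, Z x ∈ Tset n) →
        ∀ v, ℓ (fderiv ℝ Z x v) = 0 := by
      intro Z hZ hZT v
      have h1 := ℓ.hasFDerivAt.comp x (hZ.analyticAt hF x).differentiableAt.hasFDerivAt
      have h2 : (ℓ ∘ Z) = fun _ => (0 : ℝ) := funext fun y => (hℓ _).trans (hZT y)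
      rw [h2] at h1
      have h3 := h1.unique (hasFDerivAt_const (0 : ℝ) x)
      exact congrArg (fun L : State n →L[ℝ] ℝ => L v) h3
    change ∑ i, (lieBracket X Y x).2 i = 0
    rw [← hℓ, lieBracket, map_sub, key Y hY ihY, key X hX ihX, sub_zero]

end LocalGen

/-! ### Brackets with the drift -/

theorem fin_cyclic_induction {n : ℕ} [NeZero n] {P : Fin n → Prop} (h0 : P 0)
    (hs : ∀ k, P k → P (k + 1)) (k : Fin n) : P k := by
  obtain ⟨m, hm⟩ := k
  induction m with
  | zero => exact h0
  | succ m ih =>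
    have h := hs _ (ih (Nat.lt_of_succ_lt hm))
    have hone : ((1 : Fin n) : ℕ) = 1 := by
      rw [Fin.val_one', Nat.mod_eq_of_lt (by omega)]
    convert h using 1
    ext
    rw [Fin.val_add, hone, Nat.mod_eq_of_lt hm]

section Drift

variable {n : ℕ}

theorem analyticAt_coord_sub (i j : Fin n) (x : State n) :
    AnalyticAt ℝ (fun y : State n => y.1 i - y.1 j) x :=
  (((ContinuousLinearMap.proj i).comp (ContinuousLinearMap.fst ℝ (Fin n → ℝ) (Fin n → ℝ)) -
    (ContinuousLinearMap.proj j).comp (ContinuousLinearMap.fst ℝ (Fin n → ℝ) (Fin n → ℝ))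
      : State n →L[ℝ] ℝ)).analyticAt x

theorem analyticAt_comp_coord_sub {h : ℝ → ℝ} (hh : ∀ t, AnalyticAt ℝ h t) (i j : Fin n)
    (x : State n) : AnalyticAt ℝ (fun y : State n => h (y.1 i - y.1 j)) x :=
  (hh _).comp_of_eq (analyticAt_coord_sub i j x) rfl

/-- Derivative of `h(q_i - q_j)` along the line through `y` with direction `c`. -/
theorem hasDerivAt_comp_coord_sub {h : ℝ → ℝ} (hh : ∀ t, AnalyticAt ℝ h t) (i j : Fin n)
    (y c : State n) :
    HasDerivAt (fun t : ℝ => h ((y + t • c).1 i - (y + t • c).1 j))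
      (deriv h (y.1 i - y.1 j) * (c.1 i - c.1 j)) 0 := by
  have h1 : HasDerivAt (fun t : ℝ => (y + t • c).1 i - (y + t • c).1 j) (c.1 i - c.1 j) 0 := by
    have hl : ∀ k : Fin n, HasDerivAt (fun t : ℝ => (y + t • c).1 k) (c.1 k) 0 := by
      intro k
      simpa using ((hasDerivAt_id (0 : ℝ)).mul_const (c.1 k)).const_add (y.1 k)
    exact (hl i).sub (hl j)
  have h2 : HasDerivAt h (deriv h (y.1 i - y.1 j))
      ((y + (0 : ℝ) • c).1 i - (y + (0 : ℝ) • c).1 j) := by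
    simpa using (hh (y.1 i - y.1 j)).differentiableAt.hasDerivAt
  exact h2.comp (0 : ℝ) h1

variable [NeZero n] {Φ : ℝ → ℝ}

theorem drift_analyticAt (hΦ : ∀ t, AnalyticAt ℝ Φ t) (x : State n) :
    AnalyticAt ℝ (drift n Φ) x := by
  have hd : ∀ t, AnalyticAt ℝ (deriv Φ) t := fun t => (hΦ t).deriv
  refine analyticAt_snd.prod (AnalyticAt.pi fun k => ?_)
  exact (analyticAt_comp_coord_sub hd _ _ x).sub (analyticAt_comp_coord_sub hd _ _ x)

theorem fderiv_drift_apply (hΦ : ∀ t, AnalyticAt ℝ Φ t) (y c : State n) :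
    fderiv ℝ (drift n Φ) y c = (c.2, fun k =>
      deriv (deriv Φ) (y.1 (k - 1) - y.1 k) * (c.1 (k - 1) - c.1 k) -
      deriv (deriv Φ) (y.1 k - y.1 (k + 1)) * (c.1 k - c.1 (k + 1))) := by
  have hd : ∀ t, AnalyticAt ℝ (deriv Φ) t := fun t => (hΦ t).deriv
  have h1 := (drift_analyticAt hΦ y).differentiableAt.hasFDerivAt.hasLineDerivAt c
  refine HasDerivAt.unique h1 (HasDerivAt.prodMk ?_ (hasDerivAt_pi.2 fun k => ?_))
  · have : HasDerivAt (fun t : ℝ => y.2 + t • c.2) c.2 0 := by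
      simpa using ((hasDerivAt_id (0 : ℝ)).smul_const c.2).const_add y.2
    exact this
  · exact (hasDerivAt_comp_coord_sub hd _ _ y c).sub (hasDerivAt_comp_coord_sub hd _ _ y c)

theorem lieBracket_const_drift (hΦ : ∀ t, AnalyticAt ℝ Φ t) (y c : State n) :
    lieBracket (fun _ => c) (drift n Φ) y = (c.2, fun k =>
      deriv (deriv Φ) (y.1 (k - 1) - y.1 k) * (c.1 (k - 1) - c.1 k) -
      deriv (deriv Φ) (y.1 k - y.1 (k + 1)) * (c.1 k - c.1 (k + 1))) := by
  simp [lieBracket, fderiv_drift_apply hΦ]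

theorem lieBracket_momentum_drift (hΦ : ∀ t, AnalyticAt ℝ Φ t) (w : Fin n → ℝ) (y : State n) :
    lieBracket (fun _ => ((0, w) : State n)) (drift n Φ) y = (w, 0) := by
  rw [lieBracket_const_drift hΦ]
  ext k <;> simp

/-- The `m + 1`-fold bracket of `∂/∂q_k` with the drift; see `lieBracket_position_drift` and
`lieBracket_position_adField`. -/
def adField (n : ℕ) [NeZero n] (Φ : ℝ → ℝ) (k : Fin n) (m : ℕ) (y : State n) : State n :=
  iteratedDeriv m (deriv (deriv Φ)) (y.1 k - y.1 (k + 1)) • (ep n (k + 1) - ep n k) +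
  ((-1) ^ m * iteratedDeriv m (deriv (deriv Φ)) (y.1 (k - 1) - y.1 k)) •
    (ep n (k - 1) - ep n k)

theorem lieBracket_position_drift (hΦ : ∀ t, AnalyticAt ℝ Φ t) (k : Fin n) :
    lieBracket (fun _ => eq' n k) (drift n Φ) = adField n Φ k 0 := by
  funext y
  rw [lieBracket_const_drift hΦ]
  refine Prod.ext ?_ (funext fun j => ?_)
  · simp [eq', adField, ep]
  · simp only [eq', adField, ep, iteratedDeriv_zero, pow_zero, one_mul, Prod.snd_add,
      Prod.smul_snd, Prod.snd_sub, Pi.add_apply, Pi.smul_apply, Pi.sub_apply, smul_eq_mul,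
      Pi.single_apply]
    have e1 : (j - 1 = k) ↔ (j = k + 1) := sub_eq_iff_eq_add
    have e2 : (j + 1 = k) ↔ (j = k - 1) := eq_sub_iff_add_eq.symm
    simp only [e1, e2]
    by_cases hk : j = k
    · subst hk
      simp only [if_true]
      have e3 : (j = j + 1) ↔ (j = j - 1) := by rw [← e2, eq_comm]
      simp only [e3]
      split_ifs with h
      · have h' := e3.2 h
        rw [← h, ← h']; ring
      · ring
    · simp only [hk, if_false]
      by_cases h1 : j = k + 1 <;> by_cases h2 : j = k - 1
      · rw [if_pos h1, if_pos h2, e2.2 h2, e1.2 h1, ← h1, ← h2]; ring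
      · rw [if_pos h1, if_neg h2, e1.2 h1, ← h1]; ring
      · rw [if_neg h1, if_pos h2, e2.2 h2, ← h2]; ring
      · rw [if_neg h1, if_neg h2]; ring

theorem lieBracket_position_adField (hn : 3 ≤ n) (hΦ : ∀ t, AnalyticAt ℝ Φ t) (k : Fin n) (m : ℕ) :
    lieBracket (fun _ => eq' n k) (adField n Φ k m) = adField n Φ k (m + 1) := by
  have hone : (1 : Fin n) ≠ 0 := by rw [Ne, Fin.one_eq_zero_iff]; omega
  have hk1 : k + 1 ≠ k := by simpa using hone
  have hk2 : k - 1 ≠ k := by simpa using hone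
  have hψ : ∀ t, AnalyticAt ℝ (iteratedDeriv m (deriv (deriv Φ))) t := fun t => by
    rw [iteratedDeriv_eq_iterate]
    exact (hΦ t).deriv.deriv.iterated_deriv m
  funext y
  have hA : AnalyticAt ℝ (adField n Φ k m) y :=
    ((analyticAt_comp_coord_sub hψ _ _ y).smul analyticAt_const).add
      ((analyticAt_const.mul (analyticAt_comp_coord_sub hψ _ _ y)).smul analyticAt_const)
  have h1 := hA.differentiableAt.hasFDerivAt.hasLineDerivAt (eq' n k)
  have h2 := ((hasDerivAt_comp_coord_sub hψ k (k + 1) y (eq' n k)).smul_const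
      (ep n (k + 1) - ep n k)).add
    (((hasDerivAt_comp_coord_sub hψ (k - 1) k y (eq' n k)).const_mul ((-1 : ℝ) ^ m)).smul_const
      (ep n (k - 1) - ep n k))
  have h3 := HasDerivAt.unique h1 h2
  simp only [lieBracket, fderiv_fun_const, Pi.zero_apply, zero_apply, sub_zero, h3]
  simp [adField, eq', hk1, hk2, iteratedDeriv_succ, pow_succ]

theorem drift_mem_Tset (x : State n) : drift n Φ x ∈ Tset n := by
  change ∑ k, (deriv Φ (x.1 (k - 1) - x.1 k) - deriv Φ (x.1 k - x.1 (k + 1))) = 0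
  rw [Finset.sum_sub_distrib, sub_eq_zero]
  refine (Equiv.sum_comp (Equiv.addRight (1 : Fin n)) _).symm.trans ?_
  simp

/-- Propagation step. If `∂/∂q_k` is locally generated, then so are its iterated brackets with the
drift, all of which are combinations of `∂/∂p_{k+1} - ∂/∂p_k` and `∂/∂p_{k-1} - ∂/∂p_k`. Two of
them are independent at `x`, hence near `x`, and Cramer's rule isolates the first direction. -/
theorem localGen_momentum_diff (hn : 3 ≤ n) (hΦ : ∀ t, AnalyticAt ℝ Φ t) (hgen : Generic Φ)
    {F : Set (State n → State n)} (hF : ∀ X ∈ F, ∀ x, AnalyticAt ℝ X x) (hf : drift n Φ ∈ F)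
    {x : State n} {k : Fin n} (hk : LocalGen n F x (fun _ => eq' n k)) :
    LocalGen n F x (fun _ => ep n (k + 1) - ep n k) := by
  have had : ∀ m, LocalGen n F x (adField n Φ k m) := by
    intro m
    induction m with
    | zero =>
      rw [← lieBracket_position_drift hΦ]
      exact hk.bracket hF (.gen _ (.base _ hf))
    | succ m ih =>
      rw [← lieBracket_position_adField hn hΦ]
      exact hk.bracket hF ih
  have hψ : ∀ m t, AnalyticAt ℝ (iteratedDeriv m (deriv (deriv Φ))) t := fun m t => by
    rw [iteratedDeriv_eq_iterate]
    exact (hΦ t).deriv.deriv.iterated_deriv m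
  obtain ⟨m, l, hW⟩ := exists_wronskian_ne_zero (fun t => (hΦ t).deriv.deriv) hgen
    (x.1 k - x.1 (k + 1)) (x.1 (k - 1) - x.1 k)
  let u : ℕ → State n → ℝ := fun m y =>
    iteratedDeriv m (deriv (deriv Φ)) (y.1 k - y.1 (k + 1))
  let w : ℕ → State n → ℝ := fun m y =>
    (-1) ^ m * iteratedDeriv m (deriv (deriv Φ)) (y.1 (k - 1) - y.1 k)
  have hu : ∀ m, AnalyticAt ℝ (u m) x := fun m => analyticAt_comp_coord_sub (hψ m) _ _ x
  have hw : ∀ m, AnalyticAt ℝ (w m) x := fun m =>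
    analyticAt_const.mul (analyticAt_comp_coord_sub (hψ m) _ _ x)
  let W : State n → ℝ := fun y => u m y * w l y - u l y * w m y
  have hWan : AnalyticAt ℝ W x := ((hu m).mul (hw l)).sub ((hu l).mul (hw m))
  have hWx : W x ≠ 0 := hW
  refine LocalGen.congr _ _ ?_ (LocalGen.add _ _
    (LocalGen.smul (fun y => w l y / W y) _ ((hw l).div hWan hWx) (had m))
    (LocalGen.smul (fun y => -(w m y / W y)) _ ((hw m).div hWan hWx).neg (had l)))
  filter_upwards [hWan.continuousAt.eventually_ne hWx] with y hy
  change (w l y / W y) • (u m y • (ep n (k + 1) - ep n k) + w m y • (ep n (k - 1) - ep n k)) +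
    (-(w m y / W y)) • (u l y • (ep n (k + 1) - ep n k) + w l y • (ep n (k - 1) - ep n k)) = _
  have h1 : w l y / W y * u m y - w m y / W y * u l y = 1 := by
    rw [div_mul_eq_mul_div, div_mul_eq_mul_div, ← sub_div, div_eq_one_iff_eq hy]
    simp only [W]; ring
  have h2 : w l y / W y * w m y - w m y / W y * w l y = 0 := by ring
  calc _ = (w l y / W y * u m y - w m y / W y * u l y) • (ep n (k + 1) - ep n k) +
        (w l y / W y * w m y - w m y / W y * w l y) • (ep n (k - 1) - ep n k) := by module
    _ = _ := by rw [h1, h2, one_smul, zero_smul, add_zero]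

/-- The positions are reached one after the other around the ring, since
`[∂/∂p_{k+1} - ∂/∂p_k, f] = ∂/∂q_{k+1} - ∂/∂q_k`. -/
theorem localGen_position (hn : 3 ≤ n) (hΦ : ∀ t, AnalyticAt ℝ Φ t) (hgen : Generic Φ)
    {F : Set (State n → State n)} (hF : ∀ X ∈ F, ∀ x, AnalyticAt ℝ X x) (hf : drift n Φ ∈ F)
    {x : State n} (h0 : LocalGen n F x (fun _ => eq' n 0)) (k : Fin n) :
    LocalGen n F x (fun _ => eq' n k) := by
  refine fin_cyclic_induction (P := fun k => LocalGen n F x (fun _ => eq' n k)) h0 (fun k ih => ?_) k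
  have h1 := (localGen_momentum_diff hn hΦ hgen hF hf ih).bracket hF (.gen _ (.base _ hf))
  refine LocalGen.congr _ _ (Eventually.of_forall fun y => ?_) (LocalGen.add _ _ h1 ih)
  have : ep n (k + 1) - ep n k = ((0, Pi.single (k + 1) 1 - Pi.single k 1) : State n) := by
    simp [ep]
  simp only [Pi.add_apply, this, lieBracket_momentum_drift hΦ]
  simp [eq']

/-- A submodule containing every `∂/∂q_k` and every `∂/∂p_{k+1} - ∂/∂p_k` contains the direction
space of the zero-momentum hyperplane. -/
theorem Tset_subset_of_mem {S : Submodule ℝ (State n)} (hq : ∀ k, eq' n k ∈ S)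
    (hp : ∀ k, ep n (k + 1) - ep n k ∈ S) : Tset n ⊆ S := by
  have hp0 : ∀ k, ep n k - ep n 0 ∈ S := fin_cyclic_induction (by simp) fun k ih => by
    simpa using S.add_mem (hp k) ih
  intro y hy
  have hy' : ∑ i, y.2 i = 0 := hy
  have hdec : y = ∑ k, y.1 k • eq' n k + ∑ k, y.2 k • (ep n k - ep n 0) := by
    simp only [smul_sub, Finset.sum_sub_distrib, ← Finset.sum_smul, hy', zero_smul, sub_zero]
    refine Prod.ext (funext fun j => ?_) (funext fun j => ?_)
    · simp [Prod.fst_sum, eq', ep, Finset.sum_apply, Pi.single_apply]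
    · simp [Prod.snd_sum, eq', ep, Finset.sum_apply, Pi.single_apply]
  rw [SetLike.mem_coe, hdec]
  exact S.add_mem (S.sum_mem fun k _ => S.smul_mem _ (hq k))
    (S.sum_mem fun k _ => S.smul_mem _ (hp0 k))

end Drift

/-- Invariance and bracket generation of the 2-distribution spanned by
`f` and `[g,f]` on the zero-momentum hyperplane `Π`. -/
theorem distribution_on_zero_momentum (n : ℕ) [NeZero n] (hn : 3 ≤ n) (Φ : ℝ → ℝ)
    (hadm : Admissible Φ) (hgen : Generic Φ) :
    (∀ x : State n, lieBracket (fun _ => ep n 0) (drift n Φ) x = eq' n 0) ∧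
    (∀ x : State n, drift n Φ x ∈ Tset n ∧
      lieBracket (fun _ => ep n 0) (drift n Φ) x ∈ Tset n) ∧
    (∀ x : State n, (∑ i, x.2 i = 0) →
      (Submodule.span ℝ
        {v : State n | ∃ X : State n → State n,
          LieGen n {drift n Φ, lieBracket (fun _ => ep n 0) (drift n Φ)} X ∧ X x = v} :
            Set (State n)) = Tset n) := by
  have hΦ := hadm.1
  have hgf : ∀ x : State n, lieBracket (fun _ => ep n 0) (drift n Φ) x = eq' n 0 := fun x =>
    lieBracket_momentum_drift hΦ _ x
  have hq0 : eq' n 0 ∈ Tset n := by simp [Tset, eq']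
  refine ⟨hgf, fun x => ⟨drift_mem_Tset x, hgf x ▸ hq0⟩, fun x _ => ?_⟩
  have hgf' : lieBracket (fun _ => ep n 0) (drift n Φ) = fun _ => eq' n 0 := funext hgf
  rw [hgf']
  have hF : ∀ X ∈ ({drift n Φ, fun _ => eq' n 0} : Set (State n → State n)),
      ∀ x, AnalyticAt ℝ X x := by
    rintro X (rfl | rfl) x
    · exact drift_analyticAt hΦ x
    · exact analyticAt_const
  have hT : ∀ X ∈ ({drift n Φ, fun _ => eq' n 0} : Set (State n → State n)),
      ∀ x, X x ∈ Tset n := by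
    rintro X (rfl | rfl) x
    · exact drift_mem_Tset x
    · exact hq0
  have hf : drift n Φ ∈ ({drift n Φ, fun _ => eq' n 0} : Set (State n → State n)) := Or.inl rfl
  have hpos := localGen_position hn hΦ hgen hF hf (x := x) (.gen _ (.base _ (Or.inr rfl)))
  apply Subset.antisymm
  · intro v hv
    induction hv using Submodule.span_induction with
    | mem v h =>
      obtain ⟨X, hX, rfl⟩ := h
      exact hX.sum_snd_eq_zero hF hT x
    | zero => simp [Tset]
    | add v w _ _ hv hw =>
      have hv' : ∑ i, v.2 i = 0 := hv
      have hw' : ∑ i, w.2 i = 0 := hw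
      simp [Tset, Finset.sum_add_distrib, hv', hw']
    | smul c v _ hv =>
      have hv' : ∑ i, v.2 i = 0 := hv
      simp [Tset, ← Finset.mul_sum, hv']
  · exact Tset_subset_of_mem (fun k => (hpos k).mem_span)
      fun k => (localGen_momentum_diff hn hΦ hgen hF hf (hpos k)).mem_span
end
end

section
/- Low-dimensional invariant plane for the single forced periodic trimer: Let b ∈ ℝ, let F : ℝ → ℝ be a continuously differentiable odd function with F(−3b) = 0, let κ ∈ ℝ, and set φ(t) = F(t − b) + κ. Consider the controlled periodic trimer: q̇ᵢ = pᵢ (i = 1,2,3), ṗ₁ = φ(q₃−q₁) − φ(q₁−q₂) + u(t), ṗ₂ = φ(q₁−q₂) − φ(q₂−q₃), ṗ₃ = φ(q₂−q₃) − φ(q₃−q₁), where u : [0,θ] → ℝ is any measurable essentially bounded control. If an absolutely continuous solution (q(t), p(t)) on [0,θ] satisfies q₃(0) − q₂(0) = 2b and p₃(0) = p₂(0), then q₃(t) − q₂(t) = 2b and p₃(t) = p₂(t) for all t ∈ [0,θ]; i.e. the 4-dimensional plane Π_b : {p₃ − p₂ = 0, q₃ − q₂ = 2b} is invariant for the control system,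 so every orbit through a point of Π_b is contained in Π_b. -/
/-!
The deviations `x = q₃ - q₂ - 2b` and `y = p₃ - p₂` from the plane satisfy a linear differential
inequality in which the control does not appear. Indeed `x' = y`, and with `c = q₂ - q₁ + b`
the oddness of `F` and `F (-3b) = 0` give
`y' = 2 (F (-3b - x) - F (-3b)) - (F (c + x) - F c)`.
All arguments of `F` stay in a compact set, on which the `C¹` function `F` is Lipschitz with some
constant `L`, so `|y'| ≤ 3 L |x|`. Since `x` and `y` vanish at time `0`, Grönwall's inequality
for the pair `(x, y)` forces both to vanish on `[0, θ]`.
-/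

open MeasureTheory Filter Set

noncomputable section

/-- A function given on `[0, θ]` by the integral of a function `g` that is continuous only on
`[0, θ]` has right derivative `g`. -/
lemma hasDerivWithinAt_of_eq_integral {θ : ℝ} (hθ : 0 < θ) {f g : ℝ → ℝ}
    (hg : ContinuousOn g (Set.Icc 0 θ))
    (hf : ∀ t ∈ Set.Icc (0:ℝ) θ, f t = f 0 + ∫ s in (0:ℝ)..t, g s)
    {t : ℝ} (ht : t ∈ Set.Ico 0 θ) : HasDerivWithinAt f (g t) (Set.Ici t) t := by
  have htc : t ∈ Set.Icc 0 θ := Set.Ico_subset_Icc_self ht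
  -- The constant extension of `g` is continuous on `ℝ` and has the same integrals over `[0, t]`.
  set G : ℝ → ℝ := Set.IccExtend hθ.le ((Set.Icc 0 θ).domRestrict g) with hG
  have hGc : Continuous G := hg.domRestrict.Icc_extend'
  have hGg : ∀ s ∈ Set.Icc 0 θ, G s = g s := fun s hs => by
    rw [hG, Set.IccExtend_of_mem _ _ hs, Set.domRestrict_apply]
  have hfG : ∀ r ∈ Set.Icc 0 θ, f r = f 0 + ∫ s in (0:ℝ)..r, G s := fun r hr => by
    rw [hf r hr]
    congr 1
    refine intervalIntegral.integral_congr fun s hs => (hGg s ?_).symm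
    rw [Set.uIcc_of_le hr.1] at hs
    exact ⟨hs.1, hs.2.trans hr.2⟩
  have hd : HasDerivWithinAt (fun r => f 0 + ∫ s in (0:ℝ)..r, G s) (G t) (Set.Ici t) t :=
    ((hGc.integral_hasStrictDerivAt 0 t).hasDerivAt.const_add (f 0)).hasDerivWithinAt
  rw [hGg t htc] at hd
  refine hd.congr_of_eventuallyEq ?_ (hfG t htc)
  filter_upwards [Icc_mem_nhdsGE ht.2] with r hr
  exact hfG r ⟨ht.1.trans hr.1, hr.2⟩

/-- Low-dimensional invariant plane for the single forced periodic trimer.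
With `φ(t) = F(t−b) + κ`, `F` odd and `F(−3b) = 0`, the plane
`Π_b : {p₃ − p₂ = 0, q₃ − q₂ = 2b}` is invariant for the controlled trimer. -/
theorem trimer_invariant_plane (b κ θ : ℝ) (hθ : 0 < θ)
    (F : ℝ → ℝ) (hF : ContDiff ℝ 1 F) (hodd : ∀ t : ℝ, F (-t) = - F t)
    (hF3b : F (-(3 * b)) = 0)
    (φ : ℝ → ℝ) (hφ : φ = fun t => F (t - b) + κ)
    (u : ℝ → ℝ) (hu : Measurable u)
    (hub : ∃ C : ℝ, ∀ᵐ t : ℝ ∂volume, t ∈ Set.Icc (0:ℝ) θ → |u t| ≤ C)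
    (q₁ q₂ q₃ p₁ p₂ p₃ : ℝ → ℝ)
    (hcq : ContinuousOn q₁ (Set.Icc 0 θ) ∧ ContinuousOn q₂ (Set.Icc 0 θ) ∧
      ContinuousOn q₃ (Set.Icc 0 θ))
    (hcp : ContinuousOn p₁ (Set.Icc 0 θ) ∧ ContinuousOn p₂ (Set.Icc 0 θ) ∧
      ContinuousOn p₃ (Set.Icc 0 θ))
    (hq₁ : ∀ t ∈ Set.Icc (0:ℝ) θ, q₁ t = q₁ 0 + ∫ s in (0:ℝ)..t, p₁ s)
    (hq₂ : ∀ t ∈ Set.Icc (0:ℝ) θ, q₂ t = q₂ 0 + ∫ s in (0:ℝ)..t, p₂ s)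
    (hq₃ : ∀ t ∈ Set.Icc (0:ℝ) θ, q₃ t = q₃ 0 + ∫ s in (0:ℝ)..t, p₃ s)
    (hp₁ : ∀ t ∈ Set.Icc (0:ℝ) θ, p₁ t = p₁ 0 +
      ∫ s in (0:ℝ)..t, (φ (q₃ s - q₁ s) - φ (q₁ s - q₂ s) + u s))
    (hp₂ : ∀ t ∈ Set.Icc (0:ℝ) θ, p₂ t = p₂ 0 +
      ∫ s in (0:ℝ)..t, (φ (q₁ s - q₂ s) - φ (q₂ s - q₃ s)))
    (hp₃ : ∀ t ∈ Set.Icc (0:ℝ) θ, p₃ t = p₃ 0 +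
      ∫ s in (0:ℝ)..t, (φ (q₂ s - q₃ s) - φ (q₃ s - q₁ s)))
    (hinitq : q₃ 0 - q₂ 0 = 2 * b) (hinitp : p₃ 0 = p₂ 0) :
    ∀ t ∈ Set.Icc (0:ℝ) θ, q₃ t - q₂ t = 2 * b ∧ p₃ t = p₂ t := by
  obtain ⟨hc1, hc2, hc3⟩ := hcq
  obtain ⟨-, hd2, hd3⟩ := hcp
  have hFc : Continuous F := hF.continuous
  have hφc : Continuous φ := by rw [hφ]; fun_prop
  -- `F` is Lipschitz on a compact set containing all the arguments at which it is compared.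
  obtain ⟨L, hL⟩ : ∃ L, LipschitzOnWith L F
      ((fun s => q₂ s - q₃ s - b) '' Set.Icc 0 θ ∪ (fun s => q₃ s - q₁ s - b) '' Set.Icc 0 θ ∪
        (fun s => q₂ s - q₁ s + b) '' Set.Icc 0 θ) := by
    refine hF.locallyLipschitz.locallyLipschitzOn.exists_lipschitzOnWith_of_compact
      (((isCompact_Icc.image_of_continuousOn ?_).union
        (isCompact_Icc.image_of_continuousOn ?_)).union
        (isCompact_Icc.image_of_continuousOn ?_)) <;> fun_prop
  have h0 : (0:ℝ) ∈ Set.Icc 0 θ := ⟨le_rfl, hθ.le⟩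
  have hderiv : ∀ t ∈ Set.Ico 0 θ,
      HasDerivWithinAt (fun s => (q₃ s - q₂ s - 2 * b, p₃ s - p₂ s))
        (p₃ t - p₂ t, (φ (q₂ t - q₃ t) - φ (q₃ t - q₁ t)) - (φ (q₁ t - q₂ t) - φ (q₂ t - q₃ t)))
        (Set.Ici t) t := by
    intro t ht
    have e2 := hasDerivWithinAt_of_eq_integral hθ hd2 hq₂ ht
    have e3 := hasDerivWithinAt_of_eq_integral hθ hd3 hq₃ ht
    have f2 := hasDerivWithinAt_of_eq_integral hθ
      (g := fun s => φ (q₁ s - q₂ s) - φ (q₂ s - q₃ s)) (by fun_prop) hp₂ ht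
    have f3 := hasDerivWithinAt_of_eq_integral hθ
      (g := fun s => φ (q₂ s - q₃ s) - φ (q₃ s - q₁ s)) (by fun_prop) hp₃ ht
    exact ((e3.sub e2).sub_const (2 * b)).prodMk (f3.sub f2)
  have hbound : ∀ t ∈ Set.Ico 0 θ,
      ‖(p₃ t - p₂ t,
        (φ (q₂ t - q₃ t) - φ (q₃ t - q₁ t)) - (φ (q₁ t - q₂ t) - φ (q₂ t - q₃ t)))‖ ≤
        (1 + 3 * (L:ℝ)) * ‖(q₃ t - q₂ t - 2 * b, p₃ t - p₂ t)‖ := by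
    intro t ht
    have htc : t ∈ Set.Icc 0 θ := Set.Ico_subset_Icc_self ht
    -- The point `-3b` lies in the compact set as the value of `q₂ - q₃ - b` at time `0`.
    have h1 : |F (q₂ t - q₃ t - b) - F (q₂ 0 - q₃ 0 - b)| ≤
        L * |(q₂ t - q₃ t - b) - (q₂ 0 - q₃ 0 - b)| :=
      hL.norm_sub_le (Or.inl (Or.inl ⟨t, htc, rfl⟩)) (Or.inl (Or.inl ⟨0, h0, rfl⟩))
    have h2 : |F (q₃ t - q₁ t - b) - F (q₂ t - q₁ t + b)| ≤
        L * |(q₃ t - q₁ t - b) - (q₂ t - q₁ t + b)| :=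
      hL.norm_sub_le (Or.inl (Or.inr ⟨t, htc, rfl⟩)) (Or.inr ⟨t, htc, rfl⟩)
    rw [show q₂ 0 - q₃ 0 - b = -(3 * b) by linarith, hF3b, sub_zero,
      show q₂ t - q₃ t - b - -(3 * b) = -(q₃ t - q₂ t - 2 * b) by ring, abs_neg] at h1
    rw [show q₃ t - q₁ t - b - (q₂ t - q₁ t + b) = q₃ t - q₂ t - 2 * b by ring] at h2
    have h3 : F (q₁ t - q₂ t - b) = -F (q₂ t - q₁ t + b) := by
      rw [← hodd]; congr 1; ring
    have hy : (φ (q₂ t - q₃ t) - φ (q₃ t - q₁ t)) - (φ (q₁ t - q₂ t) - φ (q₂ t - q₃ t)) =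
        2 * F (q₂ t - q₃ t - b) - (F (q₃ t - q₁ t - b) - F (q₂ t - q₁ t + b)) := by
      simp only [hφ, h3]; ring
    rw [hy]
    have hx := norm_fst_le (q₃ t - q₂ t - 2 * b, p₃ t - p₂ t)
    have hp := norm_snd_le (q₃ t - q₂ t - 2 * b, p₃ t - p₂ t)
    set N := ‖(q₃ t - q₂ t - 2 * b, p₃ t - p₂ t)‖
    have hN : 0 ≤ N := norm_nonneg _
    simp only [Real.norm_eq_abs] at hx hp
    have hLN : (L:ℝ) * |q₃ t - q₂ t - 2 * b| ≤ L * N := mul_le_mul_of_nonneg_left hx L.2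
    have hLN0 : 0 ≤ (L:ℝ) * N := mul_nonneg L.2 hN
    refine norm_prod_le_iff.2 ⟨?_, ?_⟩
    · simp only [Real.norm_eq_abs]; linarith
    · simp only [Real.norm_eq_abs]
      rw [abs_le] at h1 h2 ⊢
      constructor <;> linarith [h1.1, h1.2, h2.1, h2.2]
  intro t ht
  have hz := eq_zero_of_abs_deriv_le_mul_abs_self_of_eq_zero_right
    (f := fun s => (q₃ s - q₂ s - 2 * b, p₃ s - p₂ s)) (by fun_prop) hderiv
    (by simp [hinitq, hinitp]) hbound t ht
  rw [Prod.mk_eq_zero] at hz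
  exact ⟨sub_eq_zero.1 hz.1, sub_eq_zero.1 hz.2⟩
end
end

section
/- Low-dimensional invariant plane for the nonperiodic trimer forced at the middle particle: Let b ∈ ℝ, let h : ℝ → ℝ be a continuously differentiable odd function, and set φ(t) = h(t − b). Consider the controlled nonperiodic trimer: q̇ᵢ = pᵢ (i = 1,2,3), ṗ₁ = −φ(q₁−q₂), ṗ₂ = φ(q₁−q₂) − φ(q₂−q₃) + u(t), ṗ₃ = φ(q₂−q₃), where u : [0,θ] → ℝ is any measurable essentially bounded control. If an absolutely continuous solution (q(t), p(t)) on [0,θ] satisfies q₃(0) − q₁(0) = −2b and p₃(0) = p₁(0), then q₃(t) − q₁(t) = −2b and p₃(t) = p₁(t) for all t ∈ [0,θ]; i.e. the 4-dimensional plane Π′_b : {q₃ − q₁ = −2b, p₃ − p₁ = 0} is invariant for the control system, so every orbit through a point of Π′_b is contained in Π′_b. -/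
open MeasureTheory Filter Set

noncomputable section

/-! The deviation from the plane, `x = q₃ - q₁ + 2b` and `y = p₃ - p₁`, does not see the control `u`:
`x' = y`, and oddness of `h` gives
`y' = φ(q₂ - q₃) + φ(q₁ - q₂) = h(q₁ - q₂ - b) - h(q₃ - q₂ + b)`, where the two arguments of `h`
differ by exactly `x`. Along the trajectory these arguments stay in a compact set, on which the
`C¹` function `h` is Lipschitz with some constant `K`, so `‖(x, y)'‖ ≤ max 1 K * ‖(x, y)‖` in the
sup norm. Since `(x, y)` vanishes at time `0`, Grönwall's inequality shows that it vanishes on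
`[0, θ]`. -/

/-- The fundamental theorem of calculus in the one-sided form used by Grönwall's inequality: an
integral equation with integrand continuous on `[0, θ]` gives right derivatives on `[0, θ)`. -/
lemma hasDerivWithinAt_of_integral_eq {F f : ℝ → ℝ} {θ : ℝ}
    (hf : ContinuousOn f (Icc 0 θ))
    (hF : ∀ t ∈ Icc (0:ℝ) θ, F t = F 0 + ∫ s in (0:ℝ)..t, f s) {t : ℝ} (ht : t ∈ Ico 0 θ) :
    HasDerivWithinAt F (f t) (Ici t) t := by
  have hθ : (0:ℝ) ≤ θ := ht.1.trans ht.2.le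
  -- Replace the integrand by its continuous extension `g`, constant outside `[0, θ]`.
  set g : ℝ → ℝ := IccExtend hθ ((Icc 0 θ).domRestrict f) with hg
  have hgc : Continuous g := hf.domRestrict.Icc_extend'
  have hgf : ∀ s ∈ Icc (0:ℝ) θ, g s = f s := fun s hs => by
    rw [hg, IccExtend_of_mem hθ _ hs, domRestrict_apply]
  have hFg : ∀ s ∈ Icc (0:ℝ) θ, F s = F 0 + ∫ r in (0:ℝ)..s, g r := by
    intro s hs
    rw [hF s hs]
    congr 1
    refine intervalIntegral.integral_congr fun r hr => ?_
    rw [uIcc_of_le hs.1] at hr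
    exact (hgf r ⟨hr.1, hr.2.trans hs.2⟩).symm
  have hd : HasDerivAt (fun s => F 0 + ∫ r in (0:ℝ)..s, g r) (g t) t :=
    (hgc.integral_hasStrictDerivAt 0 t).hasDerivAt.const_add (F 0)
  rw [← hgf t ⟨ht.1, ht.2.le⟩]
  refine hd.hasDerivWithinAt.congr_of_eventuallyEq ?_ (hFg t ⟨ht.1, ht.2.le⟩)
  filter_upwards [Icc_mem_nhdsGE_of_mem ht] with s hs using hFg s hs

/-- Low-dimensional invariant plane for the nonperiodic trimer forced at the
middle particle. With `φ(t) = h(t−b)`, `h` odd, the plane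
`Π'_b : {q₃ − q₁ = −2b, p₃ − p₁ = 0}` is invariant for the controlled trimer. -/
theorem nonperiodic_trimer_invariant_plane (b θ : ℝ) (hθ : 0 < θ)
    (h : ℝ → ℝ) (hh : ContDiff ℝ 1 h) (hodd : ∀ t : ℝ, h (-t) = - h t)
    (φ : ℝ → ℝ) (hφ : φ = fun t => h (t - b))
    (u : ℝ → ℝ) (hu : Measurable u)
    (hub : ∃ C : ℝ, ∀ᵐ t : ℝ ∂volume, t ∈ Set.Icc (0:ℝ) θ → |u t| ≤ C)
    (q₁ q₂ q₃ p₁ p₂ p₃ : ℝ → ℝ)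
    (hcq : ContinuousOn q₁ (Set.Icc 0 θ) ∧ ContinuousOn q₂ (Set.Icc 0 θ) ∧
      ContinuousOn q₃ (Set.Icc 0 θ))
    (hcp : ContinuousOn p₁ (Set.Icc 0 θ) ∧ ContinuousOn p₂ (Set.Icc 0 θ) ∧
      ContinuousOn p₃ (Set.Icc 0 θ))
    (hq₁ : ∀ t ∈ Set.Icc (0:ℝ) θ, q₁ t = q₁ 0 + ∫ s in (0:ℝ)..t, p₁ s)
    (hq₂ : ∀ t ∈ Set.Icc (0:ℝ) θ, q₂ t = q₂ 0 + ∫ s in (0:ℝ)..t, p₂ s)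
    (hq₃ : ∀ t ∈ Set.Icc (0:ℝ) θ, q₃ t = q₃ 0 + ∫ s in (0:ℝ)..t, p₃ s)
    (hp₁ : ∀ t ∈ Set.Icc (0:ℝ) θ, p₁ t = p₁ 0 +
      ∫ s in (0:ℝ)..t, (- φ (q₁ s - q₂ s)))
    (hp₂ : ∀ t ∈ Set.Icc (0:ℝ) θ, p₂ t = p₂ 0 +
      ∫ s in (0:ℝ)..t, (φ (q₁ s - q₂ s) - φ (q₂ s - q₃ s) + u s))
    (hp₃ : ∀ t ∈ Set.Icc (0:ℝ) θ, p₃ t = p₃ 0 +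
      ∫ s in (0:ℝ)..t, φ (q₂ s - q₃ s))
    (hinitq : q₃ 0 - q₁ 0 = -(2 * b)) (hinitp : p₃ 0 = p₁ 0) :
    ∀ t ∈ Set.Icc (0:ℝ) θ, q₃ t - q₁ t = -(2 * b) ∧ p₃ t = p₁ t := by
  subst hφ
  obtain ⟨c₁, c₂, c₃⟩ := hcq
  obtain ⟨d₁, -, d₃⟩ := hcp
  have hhc : Continuous h := hh.continuous
  have hA : ContinuousOn (fun s => q₁ s - q₂ s - b) (Icc 0 θ) := (c₁.sub c₂).sub continuousOn_const
  have hB : ContinuousOn (fun s => q₃ s - q₂ s + b) (Icc 0 θ) := (c₃.sub c₂).add continuousOn_const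
  obtain ⟨K, hK⟩ := LocallyLipschitzOn.exists_lipschitzOnWith_of_compact
    ((isCompact_Icc.image_of_continuousOn hA).union (isCompact_Icc.image_of_continuousOn hB))
    hh.locallyLipschitz.locallyLipschitzOn
  have key : ∀ t ∈ Icc (0:ℝ) θ, ((q₃ t - q₁ t + 2 * b, p₃ t - p₁ t) : ℝ × ℝ) = 0 := by
    refine eq_zero_of_abs_deriv_le_mul_abs_self_of_eq_zero_right
      (f' := fun t => (p₃ t - p₁ t, h (q₂ t - q₃ t - b) - -h (q₁ t - q₂ t - b)))
      (K := max 1 K) (((c₃.sub c₁).add continuousOn_const).prodMk (d₃.sub d₁)) ?_ ?_ ?_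
    · intro t ht
      have e₁ := hasDerivWithinAt_of_integral_eq d₁ hq₁ ht
      have e₃ := hasDerivWithinAt_of_integral_eq d₃ hq₃ ht
      have f₁ := hasDerivWithinAt_of_integral_eq (hhc.comp_continuousOn hA).neg hp₁ ht
      have f₃ := hasDerivWithinAt_of_integral_eq
        (hhc.comp_continuousOn ((c₂.sub c₃).sub (continuousOn_const (c := b)))) hp₃ ht
      exact ((e₃.sub e₁).add_const (2 * b)).prodMk (f₃.sub f₁)
    · ext
      · simp only [Prod.fst_zero]; linarith
      · simp only [Prod.snd_zero]; linarith
    · intro t ht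
      have ht' := Ico_subset_Icc_self ht
      have hlip := hK.dist_le_mul _ (Or.inl (mem_image_of_mem _ ht'))
        _ (Or.inr (mem_image_of_mem _ ht'))
      have hsymm : h (q₂ t - q₃ t - b) = -h (q₃ t - q₂ t + b) := by
        rw [← hodd]; congr 1; ring
      have hx : q₁ t - q₂ t - b - (q₃ t - q₂ t + b) = -(q₃ t - q₁ t + 2 * b) := by ring
      have hy : h (q₂ t - q₃ t - b) - -h (q₁ t - q₂ t - b)
          = h (q₁ t - q₂ t - b) - h (q₃ t - q₂ t + b) := by rw [hsymm]; ring
      simp only [Real.dist_eq, hx, abs_neg] at hlip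
      simp only [Prod.norm_def, Real.norm_eq_abs, hy]
      refine max_le ?_ (hlip.trans ?_)
      · rw [← one_mul |p₃ t - p₁ t|]
        gcongr
        · exact le_max_left _ _
        · rw [one_mul]; exact le_max_right _ _
      · gcongr
        · exact le_max_right _ _
        · exact le_max_left _ _
  intro t ht
  have h₁ := congrArg Prod.fst (key t ht)
  have h₂ := congrArg Prod.snd (key t ht)
  simp only [Prod.fst_zero, Prod.snd_zero] at h₁ h₂
  exact ⟨by linarith, by linarith⟩
end
end

section
/- Compactness of energy sublevels on fixed-momentum–fixed-barycenter planes: Assume Φ : ℝ → ℝ is continuous, bounded below, and Φ(y) → +∞ as y → +∞. Then for every c ∈ ℝ and Q ∈ ℝ, the set { (q,p) ∈ ℝⁿ × ℝⁿ : H(q,p) ≤ c, Σ_{i=1}^n p_i = 0, Σ_{i=1}^n q_i = Q } is compact. -/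
/-!
The sublevel set is closed because `Ham` is continuous, so it suffices to bound it. Let `m` be a lower
bound of `Φ`. Since `½ Σ p_k² + Σ (Φ(q_j − q_{j+1}) − m) ≤ c − n m` and all summands are nonnegative,
each `p_k²` and each `Φ(q_j − q_{j+1})` is bounded above. As `Φ → +∞` at `+∞`, the differences
`q_j − q_{j+1}` are bounded above by some `B ≥ 0`. Going around the cycle from `j` to `i` gives
`q_j − q_i ≤ n B` for all `i, j` (`sub_le_of_cyclic_step`), which is a two-sided bound because `i` and
`j` may be exchanged; averaging over `i` with `Σ q_i = Q` bounds every `|n q_j − Q|`.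
-/

open scoped BigOperators
open Filter

noncomputable section

/-- The Hamiltonian of the periodic multiparticle system:
`H(q,p) = ½ Σ p_k² + Σ Φ(q_j − q_{j+1})` with cyclic indexing. -/
def Ham (n : ℕ) [NeZero n] (Φ : ℝ → ℝ) (x : State n) : ℝ :=
  (1 / 2) * ∑ k, (x.2 k) ^ 2 + ∑ j, Φ (x.1 j - x.1 (j + 1))

/-- One-sided bounds on consecutive cyclic differences control all differences, because on a cycle
every index is reached from every other one by at most `n` forward steps. -/
lemma sub_le_of_cyclic_step {n : ℕ} [NeZero n] {q : Fin n → ℝ} {B : ℝ} (hB : 0 ≤ B)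
    (h : ∀ j, q j - q (j + 1) ≤ B) (j i : Fin n) : q j - q i ≤ n * B := by
  let _ := Fin.instCommRing n
  have key : ∀ k : ℕ, q j - q (j + (k : Fin n)) ≤ k * B := by
    intro k
    induction k with
    | zero => simp
    | succ k ih =>
      have h1 := h (j + (k : Fin n))
      rw [add_assoc] at h1
      push_cast
      linarith
  have h2 := key (i - j).val
  rw [Fin.cast_val_eq_self, add_sub_cancel] at h2
  have h3 : (((i - j).val : ℕ) : ℝ) ≤ n := by exact_mod_cast (i - j).isLt.le
  exact h2.trans (mul_le_mul_of_nonneg_right h3 hB)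

lemma continuous_Ham (n : ℕ) [NeZero n] {Φ : ℝ → ℝ} (hcont : Continuous Φ) :
    Continuous (Ham n Φ) := by
  unfold Ham
  fun_prop

/-- Compactness of energy sublevels on fixed-momentum–fixed-barycenter
planes `Π_Q ∩ {H ≤ c}`. -/
theorem energy_sublevel_compact (n : ℕ) [NeZero n] (hn : 3 ≤ n) (Φ : ℝ → ℝ)
    (hcont : Continuous Φ) (hbdd : BddBelow (Set.range Φ))
    (htend : Tendsto Φ atTop atTop) (c Q : ℝ) :
    IsCompact {x : State n | Ham n Φ x ≤ c ∧ (∑ i, x.2 i) = 0 ∧ (∑ i, x.1 i) = Q} := by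
  obtain ⟨m, hm⟩ := hbdd
  have hm' : ∀ y, m ≤ Φ y := fun y => hm ⟨y, rfl⟩
  obtain ⟨B₀, hB₀⟩ := eventually_atTop.1 (htend.eventually_gt_atTop (c - n * m + m))
  set B := max B₀ 0
  have hB : 0 ≤ B := le_max_right _ _
  have hn0 : (0 : ℝ) < n := by exact_mod_cast (by omega : 0 < n)
  set R := 2 * (c - n * m)
  set lo := (Q - n * (n * B)) / n
  set hi := (Q + n * (n * B)) / n
  refine IsCompact.of_isClosed_subset
    ((isCompact_Icc (a := fun _ : Fin n => lo) (b := fun _ => hi)).prod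
      (isCompact_Icc (a := fun _ : Fin n => -√R) (b := fun _ => √R))) ?_ ?_
  · refine (isClosed_le (continuous_Ham n hcont) continuous_const).inter
      (IsClosed.inter (isClosed_eq ?_ continuous_const) (isClosed_eq ?_ continuous_const)) <;>
      fun_prop
  · rintro ⟨q, p⟩ ⟨hH, -, hQ⟩
    simp only [Ham] at hH hQ
    have hsum : ∑ j, (Φ (q j - q (j + 1)) - m) = ∑ j, Φ (q j - q (j + 1)) - n * m := by
      simp [Finset.sum_sub_distrib]
    have hpot : 0 ≤ ∑ j, (Φ (q j - q (j + 1)) - m) :=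
      Finset.sum_nonneg fun j _ => sub_nonneg.2 (hm' _)
    have hkin : 0 ≤ ∑ k, p k ^ 2 := Finset.sum_nonneg fun k _ => sq_nonneg _
    have hp : ∀ k, |p k| ≤ √R := fun k => by
      have := Finset.single_le_sum (f := fun k => p k ^ 2) (fun k _ => sq_nonneg _)
        (Finset.mem_univ k)
      refine Real.abs_le_sqrt ?_
      simp only [R]
      linarith
    have hstep : ∀ j, q j - q (j + 1) ≤ B := fun j => by
      have := Finset.single_le_sum (f := fun j => Φ (q j - q (j + 1)) - m)
        (fun j _ => sub_nonneg.2 (hm' _)) (Finset.mem_univ j)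
      by_contra! hlt
      have := hB₀ _ ((le_max_left _ _).trans hlt.le)
      linarith
    have hdiff := sub_le_of_cyclic_step hB hstep
    have hup : ∀ j, n * q j - Q ≤ n * (n * B) := fun j => by
      have := Finset.sum_le_sum fun i (_ : i ∈ Finset.univ) => hdiff j i
      simpa [Finset.sum_sub_distrib, hQ] using this
    have hdown : ∀ j, Q - n * q j ≤ n * (n * B) := fun j => by
      have := Finset.sum_le_sum fun i (_ : i ∈ Finset.univ) => hdiff i j
      simpa [Finset.sum_sub_distrib, hQ] using this
    refine ⟨⟨fun j => ?_, fun j => ?_⟩, fun k => (abs_le.1 (hp k)).1, fun k => (abs_le.1 (hp k)).2⟩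
    · exact (div_le_iff₀ hn0).2 (by linarith [hdown j])
    · exact (le_div_iff₀ hn0).2 (by linarith [hup j])
end
end

section
/- Coordinate bounds from bounded cyclic differences and fixed sum: Let n ≥ 2, b ≥ 0, Q ∈ ℝ, and let q ∈ ℝⁿ satisfy q_j − q_{j+1} ≤ b for all j = 1, …, n (cyclic indexing, q_{n+1} = q₁) and Σ_{i=1}^n q_i = Q. Then for every j = 1, …, n: Q/n − b(n+1)/2 ≤ q_j ≤ Q/n + b(n−1)/2. -/
/-!
Chaining the cyclic inequality `m` times gives `q j - q (j + m) ≤ m * b`. As `k` runs over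
`Fin n`, both `j + k` and `j - k` run over every index once, so summing
`q j - q (j + k) ≤ k * b` and `q (j - k) - q j ≤ k * b` over `k` bounds `n * q j - Q` and
`Q - n * q j` by `b * (0 + 1 + ⋯ + (n - 1)) = b * n * (n - 1) / 2`; dividing by `n` gives the
upper bound and a lower bound with `n - 1`, stronger than the required one with `n + 1`.
-/

open scoped BigOperators

open Fin.CommRing in
lemma sub_shift_le (n : ℕ) [NeZero n] (b : ℝ) (q : Fin n → ℝ)
    (hdiff : ∀ j : Fin n, q j - q (j + 1) ≤ b) (j k : Fin n) :
    q j - q (j + k) ≤ (k : ℕ) * b := by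
  have h : ∀ m : ℕ, q j - q (j + (m : Fin n)) ≤ m * b := by
    intro m
    induction m with
    | zero => simp
    | succ m ih =>
      have := hdiff (j + (m : Fin n))
      rw [add_assoc] at this
      push_cast
      linarith
  simpa using h k

lemma sum_fin_val_mul (n : ℕ) (b : ℝ) :
    ∑ k : Fin n, ((k : ℕ) : ℝ) * b = b * n * ((n : ℝ) - 1) / 2 := by
  rw [Fin.sum_univ_eq_sum_range (fun k : ℕ => (k : ℝ) * b)]
  induction n with
  | zero => simp
  | succ n ih =>
    rw [Finset.sum_range_succ, ih]
    push_cast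
    ring

/-- Coordinate bounds from bounded cyclic differences and fixed sum:
if `q_j − q_{j+1} ≤ b` for all `j` (cyclic indexing) and `Σ q_i = Q`, then
`Q/n − b(n+1)/2 ≤ q_j ≤ Q/n + b(n−1)/2` for every `j`. -/
theorem coordinate_bounds (n : ℕ) [NeZero n] (hn : 2 ≤ n) (b Q : ℝ) (hb : 0 ≤ b)
    (q : Fin n → ℝ) (hdiff : ∀ j : Fin n, q j - q (j + 1) ≤ b)
    (hsum : (∑ i, q i) = Q) :
    ∀ j : Fin n,
      Q / n - b * ((n : ℝ) + 1) / 2 ≤ q j ∧ q j ≤ Q / n + b * ((n : ℝ) - 1) / 2 := by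
  intro j
  have hn0 : (0 : ℝ) < n := by
    have : 0 < n := by omega
    exact_mod_cast this
  have hup : n * q j - Q ≤ b * n * ((n : ℝ) - 1) / 2 := by
    have h := Finset.sum_le_sum fun k (_ : k ∈ Finset.univ) => sub_shift_le n b q hdiff j k
    have e : ∑ k, q (j + k) = Q := by
      rw [← hsum]
      exact Equiv.sum_comp (Equiv.addLeft j) q
    rw [sum_fin_val_mul, Finset.sum_sub_distrib, e] at h
    simpa using h
  have hlow : Q - n * q j ≤ b * n * ((n : ℝ) - 1) / 2 := by
    have h := Finset.sum_le_sum fun k (_ : k ∈ Finset.univ) => sub_shift_le n b q hdiff (j - k) k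
    have e : ∑ k, q (j - k) = Q := by
      rw [← hsum]
      exact Equiv.sum_comp (Equiv.subLeft j) q
    rw [sum_fin_val_mul, Finset.sum_sub_distrib, e] at h
    simpa using h
  have hQ : Q = n * (Q / n) := by field_simp
  constructor
  · have : (n : ℝ) * (Q / n - b * ((n : ℝ) - 1) / 2) ≤ n * q j := by linarith
    have := le_of_mul_le_mul_left this hn0
    linarith
  · have : (n : ℝ) * q j ≤ n * (Q / n + b * ((n : ℝ) - 1) / 2) := by linarith
    exact le_of_mul_le_mul_left this hn0
end

section
/- Nonwandering property of the free dynamics on the zero-momentum hyperplane: Assume Φ is admissible. Then every point of the hyperplane Π is nonwandering for the free dynamics; precisely, for every x̃ ∈ Π, every open neighborhood U of x̃ in ℝ^{2n}, and every T > 0, there exist a point y ∈ U ∩ Π, a time t > T, and a solution x : [0,t] → ℝ^{2n} of the free system ẋ = f(x) with x(0) = y and x(t) ∈ U. -/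
/-!
The result is Poincaré recurrence for a Hamiltonian flow with bounded energy levels, proved without
Liouville's theorem for the flow itself.

*Reduction to bounded orbits.* Replace `q' = p` by `q' = p - mean p`. The new field is defined on
all of `ℝ^{2n}`, is still of split form `(q, p) ↦ (v p, w q)`, and conserves the total position, the
total momentum and the energy `∑ p_k² / 2 + ∑ Φ (q_k - q_{k+1})`. The distances `q_k - q_{k+1}`
add up to zero around the cycle, so the energy, which bounds them from above, bounds them from
both sides (`energy_sublevel`); with the total position conserved, orbits are bounded
(`abs_position_le`). Subtracting the constant mean momentum from a solution of the new system gives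
a solution of the original one with zero total momentum.

*Truncation.* Truncating momenta and distances at a large level `R` makes `v` and `w` bounded and
Lipschitz without changing the orbits of moderate energy (`energy_conserved`), so solutions exist
on all intervals by Picard–Lindelöf.

*Recurrence* (`splitField_recurrence`). One step of the symplectic Euler scheme for a split field is
a composition of two shears, hence injective and Lebesgue measure preserving, and the scheme
converges to the solutions uniformly on bounded time intervals (`splitStep_global_error`). If the
orbits of an open set `V` stay in a bounded set, finitely many images of `V` under the scheme are
enough to force two of them to meet. Fixing that number first and the step size afterwards, the
resulting return of the scheme to `V` is shadowed by a true solution.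
-/

open scoped BigOperators
open MeasureTheory Filter Set

noncomputable section

/-! ### Split vector fields and the symplectic Euler scheme -/

/-- The split vector field `(q, p) ↦ (v p, w q)`. -/
def splitField {n : ℕ} (v w : (Fin n → ℝ) → (Fin n → ℝ)) (x : State n) : State n :=
  (v x.2, w x.1)

/-- One step of size `h` of the symplectic Euler scheme for `splitField v w`: a kick of the
momenta followed by a drift of the positions. -/
def splitStep {n : ℕ} (v w : (Fin n → ℝ) → (Fin n → ℝ)) (h : ℝ) (x : State n) : State n :=
  (x.1 + h • v (x.2 + h • w x.1), x.2 + h • w x.1)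

lemma splitStep_injective {n : ℕ} (v w : (Fin n → ℝ) → (Fin n → ℝ)) (h : ℝ) :
    Function.Injective (splitStep v w h) := by
  rintro ⟨q, p⟩ ⟨q', p'⟩ hxy
  simp only [splitStep, Prod.mk.injEq] at hxy
  obtain ⟨h1, h2⟩ := hxy
  rw [h2] at h1
  have hq : q = q' := add_right_cancel h1
  subst hq
  rw [add_right_cancel h2]

lemma splitStep_continuous {n : ℕ} {v w : (Fin n → ℝ) → (Fin n → ℝ)}
    (hv : Continuous v) (hw : Continuous w) (h : ℝ) : Continuous (splitStep v w h) := by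
  unfold splitStep
  fun_prop

/-- The scheme preserves Lebesgue measure, being a composition of two shears. -/
lemma splitStep_measurePreserving {n : ℕ} {v w : (Fin n → ℝ) → (Fin n → ℝ)}
    (hv : Continuous v) (hw : Continuous w) (h : ℝ) :
    MeasurePreserving (splitStep v w h) (volume : Measure (State n)) volume := by
  have shear : ∀ u : (Fin n → ℝ) → (Fin n → ℝ), Continuous u →
      MeasurePreserving (fun x : State n => (x.1, x.2 + h • u x.1)) volume volume := by
    intro u hu
    refine (MeasurePreserving.id (volume : Measure (Fin n → ℝ))).skew_product
      (g := fun a b => b + h • u a) ?_ (ae_of_all _ fun a => ?_)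
    · exact Continuous.measurable (by unfold Function.uncurry; fun_prop)
    · exact (measurePreserving_add_right volume (h • u a)).map_eq
  have swap : MeasurePreserving (Prod.swap : State n → State n) volume volume :=
    Measure.measurePreserving_swap
  exact (swap.comp ((shear v hv).comp swap)).comp (shear w hw)

section Estimates

variable {n : ℕ} {v w : (Fin n → ℝ) → (Fin n → ℝ)} {L M : ℝ}

lemma splitField_lipschitz (hv : ∀ a b, ‖v a - v b‖ ≤ L * ‖a - b‖)
    (hw : ∀ a b, ‖w a - w b‖ ≤ L * ‖a - b‖) (hL : 0 ≤ L) (x y : State n) :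
    ‖splitField v w x - splitField v w y‖ ≤ L * ‖x - y‖ := by
  refine max_le ((hv _ _).trans ?_) ((hw _ _).trans ?_)
  · exact mul_le_mul_of_nonneg_left (norm_snd_le (x - y)) hL
  · exact mul_le_mul_of_nonneg_left (norm_fst_le (x - y)) hL

lemma splitField_bounded (hvM : ∀ a, ‖v a‖ ≤ M) (hwM : ∀ a, ‖w a‖ ≤ M) (x : State n) :
    ‖splitField v w x‖ ≤ M := max_le (hvM _) (hwM _)

/-- Stability of the scheme. -/
lemma splitStep_lipschitz (hv : ∀ a b, ‖v a - v b‖ ≤ L * ‖a - b‖)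
    (hw : ∀ a b, ‖w a - w b‖ ≤ L * ‖a - b‖) (hL : 0 ≤ L) {h : ℝ} (hh : 0 ≤ h)
    (hhL : h * L ≤ 1) (x y : State n) :
    ‖splitStep v w h x - splitStep v w h y‖ ≤ (1 + 2 * L * h) * ‖x - y‖ := by
  have h1 : ‖x.1 - y.1‖ ≤ ‖x - y‖ := norm_fst_le (x - y)
  have h2 : ‖x.2 - y.2‖ ≤ ‖x - y‖ := norm_snd_le (x - y)
  have h0 := norm_nonneg (x - y)
  have hp : ‖(x.2 + h • w x.1) - (y.2 + h • w y.1)‖ ≤ (1 + h * L) * ‖x - y‖ := by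
    calc ‖(x.2 + h • w x.1) - (y.2 + h • w y.1)‖
        = ‖(x.2 - y.2) + h • (w x.1 - w y.1)‖ := by congr 1; module
      _ ≤ ‖x.2 - y.2‖ + h * ‖w x.1 - w y.1‖ := by
        refine (norm_add_le _ _).trans ?_
        rw [norm_smul, Real.norm_of_nonneg hh]
      _ ≤ ‖x - y‖ + h * (L * ‖x - y‖) := by
        gcongr
        exact (hw _ _).trans (by gcongr)
      _ = _ := by ring
  refine max_le ?_ (hp.trans ?_)
  · calc ‖(x.1 + h • v (x.2 + h • w x.1)) - (y.1 + h • v (y.2 + h • w y.1))‖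
        = ‖(x.1 - y.1) + h • (v (x.2 + h • w x.1) - v (y.2 + h • w y.1))‖ := by
          congr 1; module
      _ ≤ ‖x.1 - y.1‖ + h * ‖v (x.2 + h • w x.1) - v (y.2 + h • w y.1)‖ := by
        refine (norm_add_le _ _).trans ?_
        rw [norm_smul, Real.norm_of_nonneg hh]
      _ ≤ ‖x - y‖ + h * (L * ((1 + h * L) * ‖x - y‖)) := by
        gcongr
        exact (hv _ _).trans (by gcongr)
      _ ≤ _ := by
        have : h * L * (h * L) ≤ h * L * 1 :=
          mul_le_mul_of_nonneg_left hhL (mul_nonneg hh hL)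
        nlinarith
  · have := mul_nonneg hh hL
    nlinarith

/-- Consistency of the scheme: the local error is quadratic in the step size. -/
lemma splitStep_local_error (hv : ∀ a b, ‖v a - v b‖ ≤ L * ‖a - b‖)
    (hw : ∀ a b, ‖w a - w b‖ ≤ L * ‖a - b‖) (hL : 0 ≤ L)
    (hvM : ∀ a, ‖v a‖ ≤ M) (hwM : ∀ a, ‖w a‖ ≤ M) {h s t : ℝ} (hh : 0 ≤ h)
    (hs : 0 ≤ s) (hst : s + h ≤ t) {γ : ℝ → State n}
    (hγ : ∀ r ∈ Icc 0 t, HasDerivAt γ (splitField v w (γ r)) r) :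
    ‖splitStep v w h (γ s) - γ (s + h)‖ ≤ 2 * L * M * h ^ 2 := by
  have hM : 0 ≤ M := (norm_nonneg _).trans (hvM 0)
  have hsub : ∀ r ∈ Icc s (s + h), r ∈ Icc 0 t :=
    fun r hr => ⟨hs.trans hr.1, hr.2.trans hst⟩
  have hend : s + h ∈ Icc s (s + h) := ⟨by linarith, le_rfl⟩
  have hmove : ∀ r ∈ Icc s (s + h), ‖γ r - γ s‖ ≤ M * h := by
    intro r hr
    refine (norm_image_sub_le_of_norm_deriv_le_segment'
      (fun r hr => (hγ r (hsub r hr)).hasDerivWithinAt)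
      (fun r _ => splitField_bounded hvM hwM (γ r)) r hr).trans ?_
    exact mul_le_mul_of_nonneg_left (by linarith [hr.2]) hM
  have hflow : ‖(γ (s + h) - h • splitField v w (γ s)) - γ s‖ ≤ L * (M * h) * h := by
    have := norm_image_sub_le_of_norm_deriv_le_segment' (a := s) (b := s + h)
      (f := fun r => γ r - (r - s) • splitField v w (γ s))
      (f' := fun r => splitField v w (γ r) - (1 : ℝ) • splitField v w (γ s))
      (C := L * (M * h))
      (fun r hr => ((hγ r (hsub r hr)).sub
        (((hasDerivAt_id r).sub_const s).smul_const _)).hasDerivWithinAt)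
      (fun r hr => by
        rw [one_smul]
        refine (splitField_lipschitz hv hw hL _ _).trans ?_
        exact mul_le_mul_of_nonneg_left (hmove r ⟨hr.1, hr.2.le⟩) hL) (s + h) hend
    simpa using this
  have hstep : ‖splitStep v w h (γ s) - (γ s + h • splitField v w (γ s))‖
      ≤ h * (L * (h * M)) := by
    refine max_le ?_ ?_
    · calc ‖((γ s).1 + h • v ((γ s).2 + h • w (γ s).1)) - ((γ s).1 + h • v (γ s).2)‖
          = ‖h • (v ((γ s).2 + h • w (γ s).1) - v (γ s).2)‖ := by congr 1; module
        _ = h * ‖v ((γ s).2 + h • w (γ s).1) - v (γ s).2‖ := by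
          rw [norm_smul, Real.norm_of_nonneg hh]
        _ ≤ h * (L * (h * M)) := by
          gcongr
          refine (hv _ _).trans ?_
          gcongr
          rw [add_sub_cancel_left, norm_smul, Real.norm_of_nonneg hh]
          gcongr
          exact hwM _
    · have : ((γ s).2 + h • w (γ s).1) - ((γ s).2 + h • w (γ s).1) = 0 := sub_self _
      refine (le_of_eq ((congrArg norm this).trans norm_zero)).trans (by positivity)
  calc ‖splitStep v w h (γ s) - γ (s + h)‖
      = ‖(splitStep v w h (γ s) - (γ s + h • splitField v w (γ s)))
          - ((γ (s + h) - h • splitField v w (γ s)) - γ s)‖ := by congr 1; module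
    _ ≤ h * (L * (h * M)) + L * (M * h) * h := (norm_sub_le _ _).trans (add_le_add hstep hflow)
    _ = _ := by ring

/-- Convergence of the scheme: after `k` steps the error is of order `h`, uniformly in the
starting point and for bounded total time `k * h`. -/
lemma splitStep_global_error (hv : ∀ a b, ‖v a - v b‖ ≤ L * ‖a - b‖)
    (hw : ∀ a b, ‖w a - w b‖ ≤ L * ‖a - b‖) (hL : 0 ≤ L)
    (hvM : ∀ a, ‖v a‖ ≤ M) (hwM : ∀ a, ‖w a‖ ≤ M) {h t : ℝ} (hh : 0 ≤ h)
    (hhL : h * L ≤ 1) {γ : ℝ → State n}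
    (hγ : ∀ r ∈ Icc 0 t, HasDerivAt γ (splitField v w (γ r)) r) (k : ℕ) (hk : k * h ≤ t) :
    ‖(splitStep v w h)^[k] (γ 0) - γ (k * h)‖ ≤ M * h * Real.exp (2 * L * t) := by
  have hM : 0 ≤ M := (norm_nonneg _).trans (hvM 0)
  -- The discrete Grönwall recursion `e (k+1) ≤ (1 + 2 L h) e k + 2 L M h²`.
  have key : ∀ k : ℕ, k * h ≤ t → ‖(splitStep v w h)^[k] (γ 0) - γ (k * h)‖
      ≤ M * h * ((1 + 2 * L * h) ^ k - 1) := by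
    intro k
    induction k with
    | zero => simp
    | succ k ih =>
      intro hk
      push_cast at hk ⊢
      have hk' : (k : ℝ) * h + h ≤ t := by linarith
      have e1 := ih (by linarith)
      have e2 := splitStep_local_error hv hw hL hvM hwM hh (by positivity) hk' hγ
      have e3 := splitStep_lipschitz hv hw hL hh hhL
        ((splitStep v w h)^[k] (γ 0)) (γ (k * h))
      have e4 : (k + 1 : ℝ) * h = k * h + h := by ring
      rw [Function.iterate_succ_apply', e4]
      calc _ ≤ _ := norm_sub_le_norm_sub_add_norm_sub _ (splitStep v w h (γ (k * h))) _
        _ ≤ (1 + 2 * L * h) * (M * h * ((1 + 2 * L * h) ^ k - 1)) + 2 * L * M * h ^ 2 := by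
          refine add_le_add (e3.trans ?_) e2
          gcongr
        _ = _ := by ring
  refine (key k hk).trans ?_
  gcongr
  calc (1 + 2 * L * h) ^ k - 1 ≤ (1 + 2 * L * h) ^ k := by linarith
    _ ≤ (Real.exp (2 * L * h)) ^ k := by
      gcongr
      linarith [Real.add_one_le_exp (2 * L * h)]
    _ = Real.exp (2 * L * (k * h)) := by rw [← Real.exp_nat_mul]; congr 1; ring
    _ ≤ _ := by gcongr

/-- A bounded Lipschitz split field has solutions on every interval `[0, t]`. -/
lemma splitField_exists_solution (hv : ∀ a b, ‖v a - v b‖ ≤ L * ‖a - b‖)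
    (hw : ∀ a b, ‖w a - w b‖ ≤ L * ‖a - b‖) (hL : 0 ≤ L)
    (hvM : ∀ a, ‖v a‖ ≤ M) (hwM : ∀ a, ‖w a‖ ≤ M) (x : State n) {t : ℝ} (ht : 0 ≤ t) :
    ∃ γ : ℝ → State n, γ 0 = x ∧
      ∀ s ∈ Icc 0 t, HasDerivAt γ (splitField v w (γ s)) s := by
  have hM : 0 ≤ M := (norm_nonneg _).trans (hvM 0)
  -- The larger interval `[-1, t + 1]` makes the derivatives two-sided on `[0, t]`.
  have h0 : (0 : ℝ) ∈ Icc (-1) (t + 1) := ⟨by norm_num, by linarith⟩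
  have hPL : IsPicardLindelof (fun _ : ℝ => splitField v w) (⟨0, h0⟩ : Icc (-1) (t + 1)) x
      (Real.toNNReal (M * (t + 1))) 0 M.toNNReal L.toNNReal := by
    refine IsPicardLindelof.of_time_independent ?_ ?_ ?_
    · intro y _
      rw [Real.coe_toNNReal _ hM]
      exact splitField_bounded hvM hwM y
    · refine LipschitzOnWith.of_dist_le_mul fun y _ z _ => ?_
      rw [Real.coe_toNNReal _ hL, dist_eq_norm, dist_eq_norm]
      exact splitField_lipschitz hv hw hL y z
    · rw [Real.coe_toNNReal _ hM, Real.coe_toNNReal _ (by positivity)]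
      simp [ht]
  obtain ⟨γ, hγ0, hγ⟩ := hPL.exists_eq_forall_mem_Icc_hasDerivWithinAt₀
  refine ⟨γ, hγ0, fun s hs => ?_⟩
  exact (hγ s ⟨by linarith [hs.1], by linarith [hs.2]⟩).hasDerivAt
    (Icc_mem_nhds (by linarith [hs.1]) (by linarith [hs.2]))

/-- Recurrence for split fields whose solutions issued from `V` stay in a bounded set. The
pigeonhole argument of Poincaré is applied to the measure-preserving scheme with a step so small
that it shadows the solutions up to the (finite) time that the pigeonhole needs. -/
theorem splitField_recurrence (hv : ∀ a b, ‖v a - v b‖ ≤ L * ‖a - b‖)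
    (hw : ∀ a b, ‖w a - w b‖ ≤ L * ‖a - b‖) (hL : 0 ≤ L)
    (hvM : ∀ a, ‖v a‖ ≤ M) (hwM : ∀ a, ‖w a‖ ≤ M) {V B : Set (State n)}
    (hV : IsOpen V) (hVne : V.Nonempty) (hB : Bornology.IsBounded B)
    (hVB : ∀ (γ : ℝ → State n) (t : ℝ), γ 0 ∈ V →
      (∀ s ∈ Icc 0 t, HasDerivAt γ (splitField v w (γ s)) s) → ∀ s ∈ Icc 0 t, γ s ∈ B)
    {T ε : ℝ} (hT : 0 < T) (hε : 0 < ε) :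
    ∃ k : ℕ, 1 ≤ k ∧ ∃ γ : ℝ → State n, γ 0 ∈ V ∧
      (∀ s ∈ Icc 0 (k * T), HasDerivAt γ (splitField v w (γ s)) s) ∧
      ∃ z ∈ V, dist (γ (k * T)) z < ε := by
  have hM : 0 ≤ M := (norm_nonneg _).trans (hvM 0)
  have hvc : Continuous v := (LipschitzWith.of_dist_le_mul (K := L.toNNReal) fun a b => by
    rw [Real.coe_toNNReal _ hL, dist_eq_norm, dist_eq_norm]; exact hv a b).continuous
  have hwc : Continuous w := (LipschitzWith.of_dist_le_mul (K := L.toNNReal) fun a b => by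
    rw [Real.coe_toNNReal _ hL, dist_eq_norm, dist_eq_norm]; exact hw a b).continuous
  set W : Set (State n) := Metric.thickening 1 B with hWdef
  have hWfin : volume W < ⊤ := hB.thickening.measure_lt_top
  have hVpos : 0 < volume V := hV.measure_pos volume hVne
  -- `N` disjoint copies of `V` do not fit into `W`.
  obtain ⟨N, hN⟩ : ∃ N : ℕ, volume W < N * volume V :=
    ENNReal.exists_nat_mul_gt hVpos.ne' hWfin.ne
  have htot : 0 ≤ N * T := by positivity
  -- The step is `h = T / m` with `m` large.
  obtain ⟨m, hm0, hmL, hmε⟩ : ∃ m : ℕ, 0 < m ∧ T / m * L ≤ 1 ∧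
      M * (T / m) * Real.exp (2 * L * (N * T)) < min ε 1 := by
    have hlim : Tendsto (fun m : ℕ => T / (m : ℝ)) atTop (nhds 0) :=
      tendsto_const_div_atTop_nhds_zero_nat T
    have h1 : Tendsto (fun m : ℕ => T / (m : ℝ) * L) atTop (nhds 0) := by
      simpa using hlim.mul_const L
    have h2 : Tendsto (fun m : ℕ => M * (T / (m : ℝ)) * Real.exp (2 * L * (N * T)))
        atTop (nhds 0) := by
      simpa using (hlim.const_mul M).mul_const (Real.exp (2 * L * (N * T)))
    have := (h1.eventually (ge_mem_nhds one_pos)).and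
      ((h2.eventually (gt_mem_nhds (lt_min hε one_pos))).and (eventually_gt_atTop 0))
    obtain ⟨m, h1, h2, h3⟩ := this.exists
    exact ⟨m, h3, h1, h2⟩
  set h : ℝ := T / m with hh
  have hm : (m : ℝ) ≠ 0 := by exact_mod_cast hm0.ne'
  have hmh : (m : ℝ) * h = T := by rw [hh]; field_simp
  have hh0 : 0 ≤ h := by positivity
  set A : State n → State n := (splitStep v w h)^[m] with hA
  have hAinj : Function.Injective A := (splitStep_injective v w h).iterate m
  have hAcont : Continuous A := (splitStep_continuous hvc hwc h).iterate m
  have hAmp : MeasurePreserving A (volume : Measure (State n)) volume :=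
    (splitStep_measurePreserving hvc hwc h).iterate m
  have hemb : ∀ k, MeasurableEmbedding (A^[k]) := fun k =>
    (hAcont.iterate k).measurableEmbedding (hAinj.iterate k)
  have hvol : ∀ k, volume (A^[k] '' V) = volume V := fun k => by
    rw [← (hAmp.iterate k).measure_preimage_emb (hemb k) (A^[k] '' V),
      preimage_image_eq _ (hAinj.iterate k)]
  -- Shadowing of the solutions by the scheme at the times `k * T`.
  have hshadow : ∀ (γ : ℝ → State n),
      (∀ s ∈ Icc 0 (N * T), HasDerivAt γ (splitField v w (γ s)) s) → ∀ k ≤ N,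
      dist (A^[k] (γ 0)) (γ (k * T)) < min ε 1 := by
    intro γ hγ k hk
    have hkT : ((m * k : ℕ) : ℝ) * h = k * T := by
      push_cast; rw [← hmh]; ring
    have hkN : (k : ℝ) * T ≤ N * T := by gcongr
    have := splitStep_global_error hv hw hL hvM hwM hh0 hmL hγ (m * k) (hkT ▸ hkN)
    rw [hkT, Function.iterate_mul] at this
    rw [dist_eq_norm]
    exact this.trans_lt hmε
  have hsub : ∀ k ≤ N, A^[k] '' V ⊆ W := by
    rintro k hk _ ⟨x, hx, rfl⟩
    obtain ⟨γ, rfl, hγ⟩ := splitField_exists_solution hv hw hL hvM hwM x htot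
    refine Metric.mem_thickening_iff.2 ⟨γ (k * T), hVB γ _ hx hγ _ ⟨by positivity, ?_⟩, ?_⟩
    · gcongr
    · exact (hshadow γ hγ k hk).trans_le (min_le_right _ _)
  obtain ⟨i, j, hij, hjN, x, ⟨a, ha, hax⟩, ⟨b, hb, hbx⟩⟩ :
      ∃ i j : ℕ, i < j ∧ j ≤ N ∧ ((A^[i] '' V) ∩ (A^[j] '' V)).Nonempty := by
    have hmeas : ∀ k, MeasurableSet (A^[k] '' V) := fun k =>
      (hemb k).measurableSet_image.2 hV.measurableSet
    obtain ⟨i, hi, j, hj, hne, hnon⟩ := exists_nonempty_inter_of_measure_univ_lt_sum_measure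
      (volume.restrict W) (s := Finset.range N) (t := fun k => A^[k] '' V)
      (fun k _ => (hmeas k).nullMeasurableSet) (by
        rw [Measure.restrict_apply_univ]
        refine hN.trans_le (le_of_eq ?_)
        rw [Finset.sum_congr rfl fun k hk => by
          rw [Measure.restrict_eq_self _ (hsub k (Finset.mem_range.1 hk).le), hvol k]]
        simp)
    rw [Finset.mem_range] at hi hj
    rcases lt_or_gt_of_ne hne with hlt | hlt
    · exact ⟨i, j, hlt, hj.le, hnon⟩
    · exact ⟨j, i, hlt, hi.le, by rwa [inter_comm]⟩
  have hret : A^[j - i] b = a := by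
    apply hAinj.iterate i
    rw [← Function.iterate_add_apply, Nat.add_sub_cancel' hij.le, hbx, hax]
  obtain ⟨γ, rfl, hγ⟩ := splitField_exists_solution hv hw hL hvM hwM b htot
  have hjiN : j - i ≤ N := (Nat.sub_le _ _).trans hjN
  refine ⟨j - i, by omega, γ, hb, fun s hs => hγ s ⟨hs.1, hs.2.trans ?_⟩, a, ha, ?_⟩
  · gcongr
  · rw [dist_comm, ← hret]
    exact (hshadow γ hγ _ hjiN).trans_le (min_le_left _ _)

end Estimates

/-! ### The truncated particle system -/

/-- Truncation of a real number to `[-R, R]` (for `0 ≤ R`). -/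
def clamp (R y : ℝ) : ℝ := max (-R) (min R y)

lemma clamp_eq {R y : ℝ} (h : |y| ≤ R) : clamp R y = y := by
  rw [abs_le] at h
  rw [clamp, min_eq_right h.2, max_eq_right h.1]

lemma clamp_mem {R : ℝ} (hR : 0 ≤ R) (y : ℝ) : clamp R y ∈ Icc (-R) R :=
  ⟨le_max_left _ _, max_le (by linarith) (min_le_left _ _)⟩

lemma abs_clamp_le {R : ℝ} (hR : 0 ≤ R) (y : ℝ) : |clamp R y| ≤ R :=
  abs_le.2 (clamp_mem hR y)

lemma clamp_lipschitz (R : ℝ) : LipschitzWith 1 (clamp R) :=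
  (LipschitzWith.id.const_min R).const_max (-R)

lemma abs_clamp_sub_le (R y z : ℝ) : |clamp R y - clamp R z| ≤ |y - z| := by
  simpa [Real.dist_eq] using (clamp_lipschitz R).dist_le_mul y z

/-- The truncated velocity, relative to its mean. Subtracting the mean makes the total position
a conserved quantity while the field stays split. -/
def velocity (n : ℕ) (R : ℝ) (p : Fin n → ℝ) : Fin n → ℝ :=
  fun k => clamp R (p k) - (∑ j, clamp R (p j)) / n

/-- The particle forces, with truncated distances. -/
def force (n : ℕ) [NeZero n] (Φ : ℝ → ℝ) (R : ℝ) (q : Fin n → ℝ) : Fin n → ℝ :=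
  fun k => deriv Φ (clamp R (q (k - 1) - q k)) - deriv Φ (clamp R (q k - q (k + 1)))

/-- The total energy. -/
def energy (n : ℕ) [NeZero n] (Φ : ℝ → ℝ) (x : State n) : ℝ :=
  ∑ k, (x.2 k ^ 2 / 2 + Φ (x.1 k - x.1 (k + 1)))

lemma abs_mean_le {n : ℕ} [NeZero n] {a : Fin n → ℝ} {c : ℝ} (h : ∀ k, |a k| ≤ c) :
    |(∑ k, a k) / n| ≤ c := by
  have hn : (0 : ℝ) < n := by exact_mod_cast Nat.pos_of_ne_zero (NeZero.ne n)
  rw [abs_div, abs_of_pos hn, div_le_iff₀ hn]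
  calc |∑ k, a k| ≤ ∑ k, |a k| := Finset.abs_sum_le_sum_abs _ _
    _ ≤ ∑ _k : Fin n, c := Finset.sum_le_sum fun k _ => h k
    _ = c * n := by simp [mul_comm]

lemma velocity_bounded {n : ℕ} [NeZero n] {R : ℝ} (hR : 0 ≤ R) (p : Fin n → ℝ) :
    ‖velocity n R p‖ ≤ 2 * R := by
  refine (pi_norm_le_iff_of_nonneg (by positivity)).2 fun k => ?_
  have h1 := abs_mean_le (fun j => abs_clamp_le hR (p j))
  have h2 := abs_clamp_le hR (p k)
  rw [Real.norm_eq_abs]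
  exact (abs_sub _ _).trans (by linarith)

lemma velocity_lipschitz {n : ℕ} [NeZero n] (R : ℝ) (p p' : Fin n → ℝ) :
    ‖velocity n R p - velocity n R p'‖ ≤ 2 * ‖p - p'‖ := by
  refine (pi_norm_le_iff_of_nonneg (by positivity)).2 fun k => ?_
  have h : ∀ j, |clamp R (p j) - clamp R (p' j)| ≤ ‖p - p'‖ := fun j =>
    (abs_clamp_sub_le R _ _).trans (norm_le_pi_norm (p - p') j)
  have h1 := abs_mean_le h
  rw [Finset.sum_sub_distrib, sub_div] at h1
  have h2 := h k
  rw [Real.norm_eq_abs]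
  simp only [Pi.sub_apply, velocity]
  rw [abs_le] at *
  constructor <;> linarith

/-- The truncated forces are bounded and Lipschitz. -/
lemma force_bounds {n : ℕ} [NeZero n] {Φ : ℝ → ℝ} (hΦ : ∀ x, AnalyticAt ℝ Φ x) {R : ℝ}
    (hR : 0 ≤ R) : ∃ L M : ℝ, (∀ q q', ‖force n Φ R q - force n Φ R q'‖ ≤ L * ‖q - q'‖) ∧
      ∀ q, ‖force n Φ R q‖ ≤ M := by
  have hd : ∀ x, AnalyticAt ℝ (deriv Φ) x := fun x => (hΦ x).deriv
  have hd2 : ∀ x, AnalyticAt ℝ (deriv (deriv Φ)) x := fun x => (hd x).deriv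
  obtain ⟨C, hC⟩ := (isCompact_Icc (a := -R) (b := R)).exists_bound_of_continuousOn
    (f := deriv Φ) fun x _ => (hd x).continuousAt.continuousWithinAt
  obtain ⟨l, hl⟩ := (isCompact_Icc (a := -R) (b := R)).exists_bound_of_continuousOn
    (f := deriv (deriv Φ)) fun x _ => (hd2 x).continuousAt.continuousWithinAt
  have hl0 : 0 ≤ l := (norm_nonneg _).trans (hl _ (clamp_mem hR 0))
  have hC0 : 0 ≤ C := (norm_nonneg _).trans (hC _ (clamp_mem hR 0))
  have hlip : ∀ y z, |deriv Φ (clamp R y) - deriv Φ (clamp R z)| ≤ l * |y - z| := by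
    intro y z
    have := (convex_Icc (-R) R).norm_image_sub_le_of_norm_deriv_le
      (fun x _ => (hd x).differentiableAt) hl (clamp_mem hR z) (clamp_mem hR y)
    exact this.trans (mul_le_mul_of_nonneg_left (abs_clamp_sub_le R y z) hl0)
  refine ⟨4 * l, 2 * C, fun q q' => ?_, fun q => ?_⟩
  · refine (pi_norm_le_iff_of_nonneg (by positivity)).2 fun k => ?_
    have hdiff : ∀ i j, |(q i - q j) - (q' i - q' j)| ≤ 2 * ‖q - q'‖ := by
      intro i j
      have hi : |q i - q' i| ≤ ‖q - q'‖ := norm_le_pi_norm (q - q') i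
      have hj : |q j - q' j| ≤ ‖q - q'‖ := norm_le_pi_norm (q - q') j
      rw [abs_le] at *
      constructor <;> linarith
    have h1 := (hlip (q (k - 1) - q k) (q' (k - 1) - q' k)).trans
      (mul_le_mul_of_nonneg_left (hdiff _ _) hl0)
    have h2 := (hlip (q k - q (k + 1)) (q' k - q' (k + 1))).trans
      (mul_le_mul_of_nonneg_left (hdiff _ _) hl0)
    rw [Real.norm_eq_abs]
    simp only [Pi.sub_apply, force]
    rw [abs_le] at *
    constructor <;> linarith
  · refine (pi_norm_le_iff_of_nonneg (by positivity)).2 fun k => ?_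
    have h1 := hC _ (clamp_mem hR (q (k - 1) - q k))
    have h2 := hC _ (clamp_mem hR (q k - q (k + 1)))
    rw [Real.norm_eq_abs] at *
    exact (abs_sub _ _).trans (by linarith)

/-! ### Conservation laws -/

/-- Summation by parts on the cycle. -/
lemma sum_cyclic {n : ℕ} [NeZero n] (a : Fin n → Fin n → ℝ) :
    ∑ k, a (k - 1) k = ∑ k, a k (k + 1) := by
  rw [← Equiv.sum_comp (Equiv.addRight (1 : Fin n)) (fun k => a (k - 1) k)]
  simp

lemma sum_velocity {n : ℕ} [NeZero n] (R : ℝ) (p : Fin n → ℝ) :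
    ∑ k, velocity n R p k = 0 := by
  have hn : (n : ℝ) ≠ 0 := by exact_mod_cast NeZero.ne n
  simp only [velocity, Finset.sum_sub_distrib, Finset.sum_const, Finset.card_univ,
    Fintype.card_fin, nsmul_eq_mul]
  field_simp
  ring

lemma sum_force {n : ℕ} [NeZero n] (Φ : ℝ → ℝ) (R : ℝ) (q : Fin n → ℝ) :
    ∑ k, force n Φ R q k = 0 := by
  simp only [force, Finset.sum_sub_distrib]
  rw [sum_cyclic (fun i j => deriv Φ (clamp R (q i - q j))), sub_self]

lemma hasDerivAt_fst_apply {n : ℕ} {γ : ℝ → State n} {s : ℝ} {d : State n} (h : HasDerivAt γ d s) (k : Fin n) :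
    HasDerivAt (fun r => (γ r).1 k) (d.1 k) s :=
  hasDerivAt_pi.1 (hasFDerivAt_fst.comp_hasDerivAt s h) k

lemma hasDerivAt_snd_apply {n : ℕ} {γ : ℝ → State n} {s : ℝ} {d : State n} (h : HasDerivAt γ d s) (k : Fin n) :
    HasDerivAt (fun r => (γ r).2 k) (d.2 k) s :=
  hasDerivAt_pi.1 (hasFDerivAt_snd.comp_hasDerivAt s h) k

section Conservation

variable {n : ℕ} [NeZero n] {Φ : ℝ → ℝ} {R t : ℝ} {γ : ℝ → State n}

lemma eq_of_hasDerivAt_zero {g : ℝ → ℝ} {a b : ℝ} (h : ∀ s ∈ Icc a b, HasDerivAt g 0 s) :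
    ∀ s ∈ Icc a b, g s = g a :=
  constant_of_has_deriv_right_zero (fun s hs => (h s hs).continuousAt.continuousWithinAt)
    (fun s hs => (h s ⟨hs.1, hs.2.le⟩).hasDerivWithinAt)

lemma total_position_conserved
    (hγ : ∀ s ∈ Icc 0 t, HasDerivAt γ (splitField (velocity n R) (force n Φ R) (γ s)) s) :
    ∀ s ∈ Icc 0 t, ∑ k, (γ s).1 k = ∑ k, (γ 0).1 k := by
  refine eq_of_hasDerivAt_zero (g := fun s => ∑ k, (γ s).1 k) fun s hs => ?_
  rw [← sum_velocity R (γ s).2]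
  exact HasDerivAt.fun_sum fun k _ => hasDerivAt_fst_apply (hγ s hs) k

lemma total_momentum_conserved
    (hγ : ∀ s ∈ Icc 0 t, HasDerivAt γ (splitField (velocity n R) (force n Φ R) (γ s)) s) :
    ∀ s ∈ Icc 0 t, ∑ k, (γ s).2 k = ∑ k, (γ 0).2 k := by
  refine eq_of_hasDerivAt_zero (g := fun s => ∑ k, (γ s).2 k) fun s hs => ?_
  rw [← sum_force Φ R (γ s).1]
  exact HasDerivAt.fun_sum fun k _ => hasDerivAt_snd_apply (hγ s hs) k

/-- The energy is stationary along a truncated solution wherever the truncation is inactive. -/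
lemma energy_hasDerivAt_zero (hΦ : ∀ x, AnalyticAt ℝ Φ x) {s : ℝ}
    (hγ : HasDerivAt γ (splitField (velocity n R) (force n Φ R) (γ s)) s)
    (hin : ∀ k, |(γ s).2 k| < R ∧ |(γ s).1 k - (γ s).1 (k + 1)| < R) :
    HasDerivAt (fun r => energy n Φ (γ r)) 0 s := by
  set q := (γ s).1 with hq
  set p := (γ s).2 with hp
  set c := (∑ j, p j) / n with hc
  have hcl : ∀ k, clamp R (p k) = p k := fun k => clamp_eq (hin k).1.le
  have hv : ∀ k, velocity n R p k = p k - c := fun k => by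
    simp only [velocity, hcl, hc]
  have hw : ∀ k, force n Φ R q k
      = deriv Φ (q (k - 1) - q k) - deriv Φ (q k - q (k + 1)) := fun k => by
    have := (hin (k - 1)).2.le
    rw [sub_add_cancel] at this
    simp only [force, clamp_eq this, clamp_eq (hin k).2.le]
  have hterm : ∀ k, HasDerivAt
      (fun r => (γ r).2 k ^ 2 / 2 + Φ ((γ r).1 k - (γ r).1 (k + 1)))
      (p k * (deriv Φ (q (k - 1) - q k) - deriv Φ (q k - q (k + 1)))
        + deriv Φ (q k - q (k + 1)) * (p k - p (k + 1))) s := by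
    intro k
    have h2 := hasDerivAt_snd_apply hγ k
    have h1 := (hasDerivAt_fst_apply hγ k).fun_sub (hasDerivAt_fst_apply hγ (k + 1))
    have h3 := ((hΦ (q k - q (k + 1))).differentiableAt.hasDerivAt).comp s h1
    refine (((h2.fun_pow 2).div_const 2).add h3).congr_deriv ?_
    simp only [splitField, ← hq, ← hp, hv, hw]
    push_cast
    ring
  refine (HasDerivAt.fun_sum fun k _ => hterm k).congr_deriv ?_
  have := sum_cyclic (fun i j => p j * deriv Φ (q i - q j))
  calc _ = ∑ k, (p k * deriv Φ (q (k - 1) - q k)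
        - p (k + 1) * deriv Φ (q k - q (k + 1))) := by
        refine Finset.sum_congr rfl fun k _ => ?_
        ring
    _ = 0 := by rw [Finset.sum_sub_distrib, this, sub_self]

lemma energy_continuous (hΦ : ∀ x, AnalyticAt ℝ Φ x) : Continuous (energy n Φ) := by
  have : Continuous Φ := continuous_iff_continuousAt.2 fun x => (hΦ x).continuousAt
  unfold energy
  fun_prop

/-- If the truncation is inactive on a sublevel set of the energy, then it is inactive along
every truncated solution issued from that sublevel set. -/
lemma energy_conserved (hΦ : ∀ x, AnalyticAt ℝ Φ x) {E : ℝ}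
    (hE : ∀ x : State n, energy n Φ x ≤ E → ∀ k, |x.2 k| < R ∧ |x.1 k - x.1 (k + 1)| < R)
    (h0 : energy n Φ (γ 0) ≤ E)
    (hγ : ∀ s ∈ Icc 0 t, HasDerivAt γ (splitField (velocity n R) (force n Φ R) (γ s)) s) :
    ∀ s ∈ Icc 0 t, energy n Φ (γ s) ≤ E := by
  have hcont : ContinuousOn γ (Icc 0 t) :=
    fun s hs => (hγ s hs).continuousAt.continuousWithinAt
  have hopen : IsOpen {x : State n | ∀ k, |x.2 k| < R ∧ |x.1 k - x.1 (k + 1)| < R} := by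
    simp only [ofPred_forall]
    refine isOpen_iInter_of_finite fun k => ?_
    have h1 : Continuous fun x : State n => |x.2 k| := by fun_prop
    have h2 : Continuous fun x : State n => |x.1 k - x.1 (k + 1)| := by fun_prop
    exact (isOpen_lt h1 continuous_const).inter (isOpen_lt h2 continuous_const)
  have hclosed : IsClosed ({s | energy n Φ (γ s) = energy n Φ (γ 0)} ∩ Icc 0 t) := by
    rw [inter_comm]
    exact ((energy_continuous hΦ).comp_continuousOn hcont).preimage_isClosed_of_isClosed
      isClosed_Icc (isClosed_singleton (x := energy n Φ (γ 0)))
  have hsub := hclosed.Icc_subset_of_forall_mem_nhdsWithin (by simp) (by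
    rintro s ⟨hs, hst⟩
    simp only [mem_ofPred_eq] at hs
    have hs' : s ∈ Icc 0 t := ⟨hst.1, hst.2.le⟩
    have hev := (hγ s hs').continuousAt.preimage_mem_nhds
      (hopen.mem_nhds (hE _ (hs.trans_le h0)))
    obtain ⟨δ, hδ, hball⟩ := Metric.mem_nhds_iff.1 hev
    have hmin : s < min (s + δ) t := lt_min (by linarith) hst.2
    filter_upwards [Ioo_mem_nhdsGT hmin] with r hr
    have hrδ : r < s + δ := hr.2.trans_le (min_le_left _ _)
    have hrt : r < t := hr.2.trans_le (min_le_right _ _)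
    have := eq_of_hasDerivAt_zero (g := fun r => energy n Φ (γ r)) (a := s) (b := r)
      (fun u hu => energy_hasDerivAt_zero hΦ
        (hγ u ⟨hst.1.trans hu.1, hu.2.trans hrt.le⟩)
        (hball (by
          rw [Metric.mem_ball, Real.dist_eq, abs_lt]
          constructor <;> linarith [hu.1, hu.2]))) r ⟨hr.1.le, le_rfl⟩
    exact this.trans hs)
  exact fun s hs => (hsub hs).trans_le h0

/-! ### Compactness of energy levels -/

/-- The distances add up to zero around the cycle, so a bound from above, which the energy
provides, is also a bound from below. -/
lemma energy_sublevel (hadm : Admissible Φ) (E : ℝ) : ∃ R : ℝ, 0 < R ∧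
    ∀ x : State n, energy n Φ x ≤ E → ∀ k, |x.2 k| < R ∧ |x.1 k - x.1 (k + 1)| < R := by
  obtain ⟨-, ⟨B, hB⟩, htop⟩ := hadm
  have hB' : ∀ y, B ≤ Φ y := fun y => hB ⟨y, rfl⟩
  -- Bound for a single term, the other `n - 1` ones being at least `B`.
  set C := E - n * B with hC
  obtain ⟨b, hb⟩ := eventually_atTop.1 (htop.eventually_gt_atTop (C + B))
  set b' := max b 1 with hb'
  have hn : (1 : ℝ) ≤ n := by exact_mod_cast Nat.one_le_iff_ne_zero.2 (NeZero.ne n)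
  have hb1 : 1 ≤ b' := le_max_right _ _
  refine ⟨n * b' + 2 * |C| + 2, by positivity, fun x hx => ?_⟩
  have hterm : ∀ k, x.2 k ^ 2 / 2 + (Φ (x.1 k - x.1 (k + 1)) - B) ≤ C := by
    intro k
    have h1 := Finset.single_le_sum
      (f := fun k => x.2 k ^ 2 / 2 + (Φ (x.1 k - x.1 (k + 1)) - B))
      (fun i _ => by
        linarith [hB' (x.1 i - x.1 (i + 1)), sq_nonneg (x.2 i)])
      (Finset.mem_univ k)
    have h2 : ∑ k, (x.2 k ^ 2 / 2 + (Φ (x.1 k - x.1 (k + 1)) - B))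
        = energy n Φ x - n * B := by
      simp only [energy, ← add_sub_assoc, Finset.sum_sub_distrib, Finset.sum_const,
        Finset.card_univ, Fintype.card_fin, nsmul_eq_mul]
    linarith
  have hup : ∀ k, x.1 k - x.1 (k + 1) ≤ b' := by
    intro k
    by_contra! hlt
    have := hb _ ((le_max_left b 1).trans hlt.le)
    linarith [hterm k, sq_nonneg (x.2 k)]
  have hzero : ∑ k, (x.1 k - x.1 (k + 1)) = 0 := by
    rw [Finset.sum_sub_distrib, ← sum_cyclic (fun _ j => x.1 j), sub_self]
  intro k
  constructor
  · have h1 := hterm k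
    have h2 := hB' (x.1 k - x.1 (k + 1))
    have h3 := le_abs_self C
    have h4 := abs_nonneg C
    have h5 : 0 < n * b' := by positivity
    refine abs_lt_of_sq_lt_sq ?_ (by positivity)
    nlinarith
  · have hlow : (b' - (x.1 k - x.1 (k + 1))) ≤ n * b' := by
      have h1 := Finset.single_le_sum (f := fun k => b' - (x.1 k - x.1 (k + 1)))
        (fun i _ => by linarith [hup i]) (Finset.mem_univ k)
      rw [Finset.sum_sub_distrib, hzero] at h1
      simpa using h1
    have h3 := abs_nonneg C
    have h4 : b' ≤ n * b' := by nlinarith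
    rw [abs_lt]
    constructor <;> linarith [hup k]

/-- Positions are bounded in terms of the consecutive distances and of their sum. -/
lemma abs_position_le {q : Fin n → ℝ} {R C : ℝ}
    (hR : ∀ k, |q k - q (k + 1)| < R) (hC : |∑ k, q k| ≤ C) (k : Fin n) :
    |q k| ≤ 2 * n * R + C := by
  have hR0 : 0 < R := (abs_nonneg _).trans_lt (hR 0)
  have hn : (1 : ℝ) ≤ n := by exact_mod_cast Nat.one_le_iff_ne_zero.2 (NeZero.ne n)
  have hstep : ∀ i : ℕ, |q (Fin.ofNat n i) - q 0| ≤ i * R := by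
    intro i
    induction i with
    | zero => simp
    | succ i ih =>
      have h1 := (hR (Fin.ofNat n i)).le
      have h2 : Fin.ofNat n (i + 1) = Fin.ofNat n i + 1 := by
        ext
        simp [Fin.val_add]
      rw [h2]
      push_cast
      rw [abs_le] at *
      constructor <;> linarith
  have hdist : ∀ k, |q k - q 0| ≤ n * R := by
    intro k
    have := hstep k
    rw [Fin.ofNat_val_eq_self] at this
    refine this.trans ?_
    gcongr
    exact k.2.le
  have h0 : |q 0| ≤ n * R + C := by
    have h1 := abs_mean_le hdist
    have h2 : (∑ k, (q k - q 0)) / n = (∑ k, q k) / n - q 0 := by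
      rw [Finset.sum_sub_distrib]
      simp
      field_simp
    have h3 : |(∑ k, q k) / n| ≤ C := by
      rw [abs_div, abs_of_pos (by linarith : (0 : ℝ) < n)]
      exact (div_le_self (abs_nonneg _) hn).trans hC
    rw [h2] at h1
    rw [abs_le] at *
    constructor <;> linarith
  have := hdist k
  rw [abs_le] at *
  constructor <;> linarith

end Conservation

/-! ### Recurrence on the zero-momentum hyperplane -/

/-- Nonwandering property of the free dynamics on the zero-momentum
hyperplane `Π`: for every `x̃ ∈ Π`, every open neighborhood `U` of `x̃` and every `T > 0`
there are `y ∈ U ∩ Π`, `t > T` and a free solution starting at `y` returning to `U`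
at time `t`. -/
theorem nonwandering_on_zero_momentum (n : ℕ) [NeZero n] (hn : 3 ≤ n) (Φ : ℝ → ℝ)
    (hadm : Admissible Φ) (xt : State n) (hxt : (∑ i, xt.2 i) = 0)
    (U : Set (State n)) (hU : IsOpen U) (hxU : xt ∈ U) (T : ℝ) (hT : 0 < T) :
    ∃ y ∈ U, (∑ i, y.2 i) = 0 ∧ ∃ t > T, ∃ x : ℝ → State n,
      x 0 = y ∧ (∀ s ∈ Set.Icc 0 t, HasDerivAt x (drift n Φ (x s)) s) ∧ x t ∈ U := by
  have hΦ := hadm.1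
  have hn0 : (n : ℝ) ≠ 0 := by exact_mod_cast NeZero.ne n
  obtain ⟨ρ, hρ, hρU⟩ := Metric.isOpen_iff.1 hU xt hxU
  set E := energy n Φ xt + 1 with hEdef
  set C := |∑ k, xt.1 k| + 1 with hCdef
  obtain ⟨R, hR, hER⟩ := energy_sublevel (n := n) hadm E
  obtain ⟨l, M, hFl, hFM⟩ := force_bounds (n := n) hΦ hR.le
  have hcE : Continuous (energy n Φ) := energy_continuous hΦ
  set V : Set (State n) := Metric.ball xt (ρ / 4) ∩
    {x | energy n Φ x < E} ∩ {x | |∑ k, x.1 k| < C} with hV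
  have hVopen : IsOpen V := (Metric.isOpen_ball.inter (isOpen_lt hcE continuous_const)).inter
    (isOpen_lt (by fun_prop) continuous_const)
  have hVxt : xt ∈ V := ⟨⟨Metric.mem_ball_self (by positivity), by
    simp [hEdef]⟩, by simp [hCdef]⟩
  set L := max 2 (max l 0) with hL
  obtain ⟨k, hk, γ, hγV, hγ, z, hzV, hz⟩ := splitField_recurrence
    (v := velocity n R) (w := force n Φ R) (L := L) (M := max (2 * R) M)
    (V := V) (B := Metric.closedBall 0 (2 * n * R + C)) (T := T + 1) (ε := ρ / 4)
    (fun a b => (velocity_lipschitz R a b).trans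
      (mul_le_mul_of_nonneg_right (le_max_left _ _) (norm_nonneg _)))
    (fun a b => (hFl a b).trans (mul_le_mul_of_nonneg_right
      ((le_max_left l 0).trans (le_max_right _ _)) (norm_nonneg _)))
    ((le_max_right l 0).trans (le_max_right _ _))
    (fun a => (velocity_bounded hR.le a).trans (le_max_left _ _))
    (fun a => (hFM a).trans (le_max_right _ _))
    hVopen ⟨xt, hVxt⟩ Metric.isBounded_closedBall
    (by
      intro γ t hγV hγ s hs
      have hin := hER _ (energy_conserved hΦ hER hγV.1.2.le hγ s hs)
      have hpos : |∑ k, (γ s).1 k| ≤ C := by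
        rw [total_position_conserved hγ s hs]
        exact hγV.2.le
      have hC0 : 0 ≤ C := by positivity
      have hn1 : (1 : ℝ) ≤ n := by exact_mod_cast (by omega : 1 ≤ n)
      rw [mem_closedBall_zero_iff]
      refine max_le ?_ ?_
      · exact (pi_norm_le_iff_of_nonneg (by positivity)).2
          (abs_position_le (fun k => (hin k).2) hpos)
      · refine (pi_norm_le_iff_of_nonneg (by positivity)).2 fun k => ?_
        rw [Real.norm_eq_abs]
        nlinarith [(hin k).1])
    (by linarith) (by positivity)
  have hk1 : (1 : ℝ) ≤ k := by exact_mod_cast hk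
  set t := (k : ℝ) * (T + 1) with ht
  have htT : T < t := by nlinarith
  -- Passage to the frame in which the conserved total momentum vanishes.
  set c := (∑ j, (γ 0).2 j) / n with hc
  set shift : State n := (0, fun _ => c) with hshift
  have hcsmall : |c| ≤ ρ / 4 := by
    have : c = (∑ j, ((γ 0).2 j - xt.2 j)) / n := by
      rw [Finset.sum_sub_distrib, hxt, sub_zero]
    rw [this]
    refine abs_mean_le fun j => ?_
    have h1 : dist (γ 0) xt < ρ / 4 := hγV.1.1
    rw [dist_eq_norm] at h1
    exact ((norm_le_pi_norm (γ 0 - xt).2 j).trans (norm_snd_le _)).trans h1.le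
  have hshift_norm : ‖shift‖ ≤ ρ / 4 := by
    refine max_le ?_ ((pi_norm_le_iff_of_nonneg (by positivity)).2 fun j => ?_)
    · change ‖(0 : Fin n → ℝ)‖ ≤ ρ / 4
      rw [norm_zero]
      positivity
    · simpa [hshift] using hcsmall
  have hnear : ∀ y : State n, dist y xt < ρ / 2 → y - shift ∈ U := by
    intro y hy
    apply hρU
    rw [Metric.mem_ball, dist_eq_norm]
    rw [dist_eq_norm] at hy
    calc ‖y - shift - xt‖ = ‖(y - xt) - shift‖ := by congr 1; abel
      _ ≤ ‖y - xt‖ + ‖shift‖ := norm_sub_le _ _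
      _ < ρ := by linarith
  refine ⟨γ 0 - shift, hnear _ ?_, ?_, t, htT, fun s => γ s - shift, rfl, fun s hs => ?_,
    hnear _ ?_⟩
  · have : dist (γ 0) xt < ρ / 4 := hγV.1.1
    linarith
  · simp only [hshift, Prod.snd_sub, Pi.sub_apply, Finset.sum_sub_distrib, Finset.sum_const,
      Finset.card_univ, Fintype.card_fin, nsmul_eq_mul, hc]
    field_simp
    ring
  · have hin := hER _ (energy_conserved hΦ hER hγV.1.2.le hγ s hs)
    refine ((hγ s hs).sub_const shift).congr_deriv ?_
    have hmean : (∑ j, clamp R ((γ s).2 j)) / n = c := by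
      rw [hc, ← total_momentum_conserved hγ s hs]
      congr 1
      exact Finset.sum_congr rfl fun j _ => clamp_eq (hin j).1.le
    refine Prod.ext (funext fun j => ?_) (funext fun j => ?_)
    · simp only [splitField, velocity, drift, hmean, clamp_eq (hin j).1.le]
      rfl
    · have h1 := (hin (j - 1)).2.le
      rw [sub_add_cancel] at h1
      simp [splitField, force, drift, hshift, clamp_eq h1, clamp_eq (hin j).2.le]
  · have : dist z xt < ρ / 4 := hzV.1.1
    linarith [dist_triangle (γ t) z xt]
end
end
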